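/- arXiv:1505.03772 — 3 statements merged into one kernel-verified Lean document; each statement's English description precedes it below -/
import Mathlib

section
/- Let (B,σ) ∈ Θ0(n,k,a,b,β) with n ≥ 2βk, and let P be the n×n matrix with entries P_{uv} = B_{σ(u)σ(v)}, i.e. P_{uv} = a/n if σ(u) = σ(v) and P_{uv} = b/n otherwise. Then the kth largest singular value of P satisfies λ_k(P) ≥ (a−b)/(2βk). -/
open scoped BigOperators
open Filter

namespace SBM

noncomputable section

/-- Adjacency matrices of graphs on `n` nodes. -/
abbrev Adj (n : ℕ) := Fin n → Fin n → Bool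

/-- 0/1 real value of an entry of the adjacency matrix. -/
def aVal {n : ℕ} (A : Adj n) (u v : Fin n) : ℝ := if A u v then 1 else 0

/-- Probability weight of one adjacency matrix under the SBM with edge
probability matrix `P`: the entries above the diagonal are independent
Bernoulli, the matrix is symmetric with zero diagonal. -/
def weight {n : ℕ} (P : Matrix (Fin n) (Fin n) ℝ) (A : Adj n) : ℝ :=
  if (∀ u, A u u = false) ∧ (∀ u v, A u v = A v u) then
    ∏ u : Fin n, ∏ v : Fin n,
      if u < v then (if A u v then P u v else 1 - P u v) else 1
  else 0

/-- Probability of a set of adjacency matrices under the SBM with edge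
probability matrix `P`. -/
def prob {n : ℕ} (P : Matrix (Fin n) (Fin n) ℝ) (S : Set (Adj n)) : ℝ :=
  ∑ A : Adj n, S.indicator (weight P) A

/-- The edge probability matrix `P u v = B (σ u) (σ v)`. -/
def pMat {n k : ℕ} (B : Matrix (Fin k) (Fin k) ℝ) (σ : Fin n → Fin k) :
    Matrix (Fin n) (Fin n) ℝ := fun u v => B (σ u) (σ v)

/-- Size of the `i`-th community of a label assignment. -/
def comSize {n k : ℕ} (σ : Fin n → Fin k) (i : Fin k) : ℝ :=
  ((Finset.univ.filter fun u => σ u = i).card : ℝ)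

/-- Hamming loss `ℓ0`. -/
def l0 {n k : ℕ} (σ1 σ2 : Fin n → Fin k) : ℝ :=
  ((Finset.univ.filter fun u => σ1 u ≠ σ2 u).card : ℝ) / n

/-- Misclassification proportion: minimum of `ℓ0` over relabelings. -/
def misclass {n k : ℕ} (σh σ : Fin n → Fin k) : ℝ :=
  ⨅ π : Equiv.Perm (Fin k), l0 σh (fun u => π (σ u))

/-- Euclidean norm of a vector. -/
def sqnorm {n : ℕ} (x : Fin n → ℝ) : ℝ := Real.sqrt (∑ i, x i ^ 2)

/-- Operator (spectral) norm of a square matrix. -/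
def opNorm {n : ℕ} (M : Matrix (Fin n) (Fin n) ℝ) : ℝ :=
  sSup { t : ℝ | ∃ x : Fin n → ℝ, sqnorm x = 1 ∧ t = sqnorm (M.mulVec x) }

/-- The `k`-th largest singular value of a square matrix, via the
Courant–Fischer max-min characterization. -/
def kthSingular {n : ℕ} (M : Matrix (Fin n) (Fin n) ℝ) (k : ℕ) : ℝ :=
  sSup { t : ℝ | 0 ≤ t ∧ ∃ V : Submodule ℝ (Fin n → ℝ),
    Module.finrank ℝ V = k ∧ ∀ x ∈ V, t * sqnorm x ≤ sqnorm (M.mulVec x) }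

/-- The Rényi divergence of order 1/2, `I*`. -/
def renyiHalf (n : ℕ) (a b : ℝ) : ℝ :=
  -2 * Real.log (Real.sqrt ((a / n) * (b / n)) +
    Real.sqrt ((1 - a / n) * (1 - b / n)))

/-- The balanced parameter space `Θ₀(n,k,a,b,β)`. -/
def Theta0 (n k : ℕ) (a b β : ℝ) :
    Set (Matrix (Fin k) (Fin k) ℝ × (Fin n → Fin k)) :=
  { p | (∀ i, (n : ℝ) / (β * k) - 1 ≤ comSize p.2 i ∧
          comSize p.2 i ≤ β * n / k + 1) ∧
        (∀ i, p.1 i i = a / n) ∧ ∀ i j, i ≠ j → p.1 i j = b / n }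

/-- Average of the off-diagonal entries of a `k × k` matrix. -/
def offDiagAvg {k : ℕ} (B : Matrix (Fin k) (Fin k) ℝ) : ℝ :=
  (1 / ((k : ℝ) * ((k : ℝ) - 1))) *
    ∑ i : Fin k, ∑ j : Fin k, if i ≠ j then B i j else 0

/-- The general parameter space `Θ(n,k,a,b,λ,β;α)`. -/
def ThetaGen (n k : ℕ) (a b lam β α : ℝ) :
    Set (Matrix (Fin k) (Fin k) ℝ × (Fin n → Fin k)) :=
  { p | (∀ i, (n : ℝ) / (β * k) - 1 ≤ comSize p.2 i ∧
          comSize p.2 i ≤ β * n / k + 1) ∧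
        (∀ i j, p.1 i j = p.1 j i) ∧
        (∀ i j, 0 ≤ p.1 i j ∧ p.1 i j ≤ 1) ∧
        b / (α * n) ≤ offDiagAvg p.1 ∧
        (∀ i j, i ≠ j → p.1 i j ≤ b / n) ∧
        (∃ i j, i ≠ j ∧ p.1 i j = b / n) ∧
        (∀ i, a / n ≤ p.1 i i) ∧ (∃ i, p.1 i i = a / n) ∧
        (∀ i, p.1 i i ≤ α * a / n) ∧
        lam ≤ kthSingular (pMat p.1 p.2) k }

/-- The estimated community `C̃ᵢᵘ` (node `u` itself is excluded). -/
def cluster {n k : ℕ} (u : Fin n) (s : Fin n → Fin k) (i : Fin k) :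
    Finset (Fin n) :=
  Finset.univ.filter fun v => v ≠ u ∧ s v = i

/-- Number of edges within a set of nodes. -/
def edgesWithin {n : ℕ} (A : Adj n) (C : Finset (Fin n)) : ℝ :=
  (∑ v ∈ C, ∑ w ∈ C, aVal A v w) / 2

/-- Number of edges between two disjoint sets of nodes. -/
def edgesBetween {n : ℕ} (A : Adj n) (C D : Finset (Fin n)) : ℝ :=
  ∑ v ∈ C, ∑ w ∈ D, aVal A v w

/-- The connectivity estimates `B̂ᵢⱼᵘ` of Algorithm 1, based on the initial
assignment `s = σ⁰ᵤ`. -/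
def hatB {n k : ℕ} (A : Adj n) (u : Fin n) (s : Fin n → Fin k) (i j : Fin k) :
    ℝ :=
  if i = j then
    edgesWithin A (cluster u s i) /
      (((cluster u s i).card : ℝ) * (((cluster u s i).card : ℝ) - 1) / 2)
  else
    edgesBetween A (cluster u s i) (cluster u s j) /
      (((cluster u s i).card : ℝ) * ((cluster u s j).card : ℝ))

/-- `â_u = n · minᵢ B̂ᵢᵢᵘ`. -/
def hata {n k : ℕ} (A : Adj n) (u : Fin n) (s : Fin n → Fin k) : ℝ :=
  n * ⨅ i : Fin k, hatB A u s i i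

/-- `b̂_u = n · maxᵢ≠ⱼ B̂ᵢⱼᵘ`. -/
def hatb {n k : ℕ} (A : Adj n) (u : Fin n) (s : Fin n → Fin k) : ℝ :=
  n * sSup { x : ℝ | ∃ i j : Fin k, i ≠ j ∧ x = hatB A u s i j }

/-- `t = ½ log (â (1 − b̂/n) / (b̂ (1 − â/n)))`. -/
def tStat (n : ℕ) (ha hb : ℝ) : ℝ :=
  Real.log (ha * (1 - hb / n) / (hb * (1 - ha / n))) / 2

/-- `ρ = −(1/(2t)) log (((â/n)e^{−t} + 1 − â/n)/((b̂/n)e^{t} + 1 − b̂/n))`. -/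
def rhoStat (n : ℕ) (ha hb t : ℝ) : ℝ :=
  -(Real.log (((ha / n) * Real.exp (-t) + 1 - ha / n) /
      ((hb / n) * Real.exp t + 1 - hb / n))) / (2 * t)

/-- Penalized vote of node `u` for label `l`. -/
def vote {n k : ℕ} (A : Adj n) (u : Fin n) (s : Fin n → Fin k) (ρ : ℝ)
    (l : Fin k) : ℝ :=
  (∑ v ∈ cluster u s l, aVal A u v) - ρ * ((cluster u s l).card : ℝ)

/-- `lbl` maximizes the penalized vote of node `u`. -/
def VoteMax {n k : ℕ} (A : Adj n) (u : Fin n) (s : Fin n → Fin k) (ρ : ℝ)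
    (lbl : Fin k) : Prop :=
  ∀ l : Fin k, vote A u s ρ l ≤ vote A u s ρ lbl

/-- `|{v : σU_{u1}(v) = l} ∩ {v : σU_u(v) = σU_u(u)}|`. -/
def consensusCount {n k : ℕ} (σU : Fin n → Fin n → Fin k) (u1 u : Fin n)
    (l : Fin k) : ℕ :=
  (Finset.univ.filter fun v => σU u1 v = l ∧ σU u v = σU u u).card

/-- Specification of the refinement-plus-consensus scheme of Algorithm 1, with
an arbitrary family of penalties `ρ`.  `σ0 u` is the initial assignment
`σ⁰ᵤ`, `σU u` is the refined assignment `σ̂ᵤ`, `σhat` is the final output. -/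
def RefineSpec {n k : ℕ} (A : Adj n) (σ0 σU : Fin n → Fin n → Fin k)
    (ρ : Fin n → ℝ) (σhat : Fin n → Fin k) : Prop :=
  (∀ u v, v ≠ u → σU u v = σ0 u v) ∧
  (∀ u, VoteMax A u (σ0 u) (ρ u) (σU u u)) ∧
  ∀ hn : 0 < n,
    σhat ⟨0, hn⟩ = σU ⟨0, hn⟩ ⟨0, hn⟩ ∧
    ∀ u, u ≠ ⟨0, hn⟩ →
      ∀ l : Fin k, consensusCount σU ⟨0, hn⟩ u l ≤
        consensusCount σU ⟨0, hn⟩ u (σhat u)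

/-- Algorithm 1 with the standard data-driven penalties. -/
def AlgorithmOne {n k : ℕ} (A : Adj n) (σ0 σU : Fin n → Fin n → Fin k)
    (σhat : Fin n → Fin k) : Prop :=
  RefineSpec A σ0 σU
    (fun u => rhoStat n (hata A u (σ0 u)) (hatb A u (σ0 u))
      (tStat n (hata A u (σ0 u)) (hatb A u (σ0 u)))) σhat

/-- Algorithm 1 with the truncated `t_u` (truncation level `log (2/ε0)`). -/
def AlgorithmOneTrunc (ε0 : ℝ) {n k : ℕ} (A : Adj n)
    (σ0 σU : Fin n → Fin n → Fin k) (σhat : Fin n → Fin k) : Prop :=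
  RefineSpec A σ0 σU
    (fun u => rhoStat n (hata A u (σ0 u)) (hatb A u (σ0 u))
      (min (tStat n (hata A u (σ0 u)) (hatb A u (σ0 u)))
        (Real.log (2 / ε0)))) σhat

/-- Algorithm 1 with known `a` and `b`. -/
def AlgorithmOneKnown (a b : ℝ) {n k : ℕ} (A : Adj n)
    (σ0 σU : Fin n → Fin n → Fin k) (σhat : Fin n → Fin k) : Prop :=
  RefineSpec A σ0 σU (fun _ => rhoStat n a b (tStat n a b)) σhat

/-- Algorithm 1 with known `a`, `b` and truncated `t_u`. -/
def AlgorithmOneKnownTrunc (a b ε0 : ℝ) {n k : ℕ} (A : Adj n)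
    (σ0 σU : Fin n → Fin n → Fin k) (σhat : Fin n → Fin k) : Prop :=
  RefineSpec A σ0 σU
    (fun _ => rhoStat n a b (min (tStat n a b) (Real.log (2 / ε0)))) σhat

/-- The initializer `σ0 A u` (that is, `σ⁰ᵤ`) only uses the data `A₋ᵤ`. -/
def LocalInit {n k : ℕ} (σ0 : Adj n → Fin n → Fin n → Fin k) : Prop :=
  ∀ (A A' : Adj n) (u : Fin n),
    (∀ v w, v ≠ u → w ≠ u → A v w = A' v w) → σ0 A u = σ0 A' u

/-- Condition 1: the initializer is, with probability at least
`1 − C0 n^{−(1+δ)}`, within misclassification proportion `γ` of the truth,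
uniformly over the parameter space and the left-out node. -/
def Condition1 {n k : ℕ}
    (Θ : Set (Matrix (Fin k) (Fin k) ℝ × (Fin n → Fin k)))
    (σ0 : Adj n → Fin n → Fin n → Fin k) (C0 δ γ : ℝ) : Prop :=
  ∀ p ∈ Θ, ∀ u : Fin n,
    1 - C0 * (n : ℝ) ^ (-(1 + δ)) ≤
      prob (pMat p.1 p.2) { A | misclass p.2 (σ0 A u) ≤ γ }

/-- Degree of a node. -/
def degree {n : ℕ} (A : Adj n) (u : Fin n) : ℝ := ∑ v, aVal A u v

/-- Average degree `d̄`. -/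
def avgDeg {n : ℕ} (A : Adj n) : ℝ := (∑ u, degree A u) / n

/-- Trimming operator `T_τ`: zero out rows/columns of high-degree nodes. -/
def trim {n : ℕ} (A : Adj n) (τ : ℝ) : Matrix (Fin n) (Fin n) ℝ :=
  fun u v => if τ ≤ degree A u ∨ τ ≤ degree A v then 0 else aVal A u v

/-- Regularized adjacency matrix `A_τ = A + (τ/n)·11ᵀ`. -/
def addReg {n : ℕ} (A : Adj n) (τ : ℝ) : Matrix (Fin n) (Fin n) ℝ :=
  fun u v => aVal A u v + τ / n

/-- Normalized Laplacian `L(M)_{uv} = M_{uv}/√(r_u r_v)`. -/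
def lap {n : ℕ} (M : Matrix (Fin n) (Fin n) ℝ) : Matrix (Fin n) (Fin n) ℝ :=
  fun u v => M u v / Real.sqrt ((∑ w, M u w) * (∑ w, M v w))

/-- `U` is a matrix whose columns are orthonormal eigenvectors of `M`
corresponding to the `k` leading (largest in absolute value) eigenvalues. -/
def LeadingEigenvectors {n k : ℕ} (M : Matrix (Fin n) (Fin n) ℝ)
    (U : Matrix (Fin n) (Fin k) ℝ) : Prop :=
  ∃ μ : Fin k → ℝ,
    (∀ i j : Fin k, (∑ u, U u i * U u j) = if i = j then (1 : ℝ) else 0) ∧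
    (∀ j : Fin k, M.mulVec (fun u => U u j) = fun u => μ j * U u j) ∧
    ∀ (x : Fin n → ℝ) (c : ℝ), M.mulVec x = (fun u => c * x u) →
      (∀ j, (∑ u, x u * U u j) = 0) → x ≠ 0 → ∀ j, |c| ≤ |μ j|

/-- Distance between two rows of `U`. -/
def rowDist {n k : ℕ} (U : Matrix (Fin n) (Fin k) ℝ) (v w : Fin n) : ℝ :=
  Real.sqrt (∑ j, (U v j - U w j) ^ 2)

/-- Number of points of `S` within distance `r` of `v`. -/
def ballCount {n k : ℕ} (U : Matrix (Fin n) (Fin k) ℝ) (r : ℝ)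
    (S : Finset (Fin n)) (v : Fin n) : ℕ :=
  (S.filter fun w => rowDist U w v < r).card

/-- Specification of the greedy clustering scheme (Algorithm 2) with critical
radius `r`, applied to the rows of `U`. -/
def GreedyCluster {n k : ℕ} (U : Matrix (Fin n) (Fin k) ℝ) (r : ℝ)
    (σhat : Fin n → Fin k) : Prop :=
  ∃ (S : ℕ → Finset (Fin n)) (t : Fin k → Fin n) (Ch : Fin k → Finset (Fin n)),
    S 0 = Finset.univ ∧
    (∀ i : Fin k,
      ((S i.val).Nonempty → t i ∈ S i.val ∧
        ∀ v ∈ S i.val,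
          ballCount U r (S i.val) v ≤ ballCount U r (S i.val) (t i)) ∧
      Ch i = (S i.val).filter (fun v => rowDist U v (t i) < r) ∧
      S (i.val + 1) = S i.val \ Ch i) ∧
    (∀ i : Fin k, ∀ u ∈ Ch i, σhat u = i) ∧
    ∀ u ∈ S k, ∀ j : Fin k,
      (∑ v ∈ Ch (σhat u), rowDist U u v) / ((Ch (σhat u)).card : ℝ) ≤
        (∑ v ∈ Ch j, rowDist U u v) / ((Ch j).card : ℝ)

/-- `σhat` is a possible output of `USC(τ)` (with tuning constant `μ`). -/
def USCOutput {n k : ℕ} (A : Adj n) (τ μ : ℝ) (σhat : Fin n → Fin k) : Prop :=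
  ∃ U : Matrix (Fin n) (Fin k) ℝ,
    LeadingEigenvectors (trim A τ) U ∧
    GreedyCluster U (μ * Real.sqrt ((k : ℝ) / n)) σhat

/-- `σhat` is a possible output of `NSC(τ)` (with tuning constant `μ`). -/
def NSCOutput {n k : ℕ} (A : Adj n) (τ μ : ℝ) (σhat : Fin n → Fin k) : Prop :=
  ∃ U : Matrix (Fin n) (Fin k) ℝ,
    LeadingEigenvectors (lap (addReg A τ)) U ∧
    GreedyCluster U (μ * Real.sqrt ((k : ℝ) / n)) σhat

/-- The initializer `σ0 A u` is obtained by applying `USC(Cτ · d̄)` to the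
leave-one-out matrix `A₋ᵤ` (identified with a graph on `n − 1` nodes via an
injection `e` avoiding `u`). -/
def USCInitDeg {n k : ℕ} (Cτ μ : ℝ) (σ0 : Adj n → Fin n → Fin n → Fin k) :
    Prop :=
  ∀ (A : Adj n) (u : Fin n), ∃ (m : ℕ) (e : Fin m → Fin n) (s' : Fin m → Fin k),
    m + 1 = n ∧ Function.Injective e ∧ (∀ w, e w ≠ u) ∧
    USCOutput (fun v w => A (e v) (e w))
      (Cτ * avgDeg (fun v w => A (e v) (e w))) μ s' ∧
    ∀ w, σ0 A u (e w) = s' w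

/-- The initializer `σ0 A u` is obtained by applying `NSC(Cτ · d̄)` to `A₋ᵤ`. -/
def NSCInitDeg {n k : ℕ} (Cτ μ : ℝ) (σ0 : Adj n → Fin n → Fin n → Fin k) :
    Prop :=
  ∀ (A : Adj n) (u : Fin n), ∃ (m : ℕ) (e : Fin m → Fin n) (s' : Fin m → Fin k),
    m + 1 = n ∧ Function.Injective e ∧ (∀ w, e w ≠ u) ∧
    NSCOutput (fun v w => A (e v) (e w))
      (Cτ * avgDeg (fun v w => A (e v) (e w))) μ s' ∧
    ∀ w, σ0 A u (e w) = s' w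

/-- The initializer `σ0 A u` is obtained by applying `USC(τ)` (with a fixed
regularization level `τ`) to `A₋ᵤ`. -/
def USCInitTau {n k : ℕ} (τ μ : ℝ) (σ0 : Adj n → Fin n → Fin n → Fin k) :
    Prop :=
  ∀ (A : Adj n) (u : Fin n), ∃ (m : ℕ) (e : Fin m → Fin n) (s' : Fin m → Fin k),
    m + 1 = n ∧ Function.Injective e ∧ (∀ w, e w ≠ u) ∧
    USCOutput (fun v w => A (e v) (e w)) τ μ s' ∧
    ∀ w, σ0 A u (e w) = s' w

/-- The initializer `σ0 A u` is obtained by applying `NSC(τ)` (with a fixed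
regularization level `τ`) to `A₋ᵤ`. -/
def NSCInitTau {n k : ℕ} (τ μ : ℝ) (σ0 : Adj n → Fin n → Fin n → Fin k) :
    Prop :=
  ∀ (A : Adj n) (u : Fin n), ∃ (m : ℕ) (e : Fin m → Fin n) (s' : Fin m → Fin k),
    m + 1 = n ∧ Function.Injective e ∧ (∀ w, e w ≠ u) ∧
    NSCOutput (fun v w => A (e v) (e w)) τ μ s' ∧
    ∀ w, σ0 A u (e w) = s' w

/-- The minimax-rate threshold `exp(−(1−coef)·n·I*/2)` for `k = 2` and
`exp(−(1−coef)·n·I*/(βk))` for `k ≥ 3`. -/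
def rate (β : ℝ) (n k : ℕ) (a b coef : ℝ) : ℝ :=
  if k = 2 then Real.exp (-((1 - coef) * ((n : ℝ) * renyiHalf n a b)) / 2)
  else Real.exp (-((1 - coef) * ((n : ℝ) * renyiHalf n a b)) / (β * k))

/-- `sup_{(B,σ)∈Θ₀} P{ℓ(σ,σ̂) ≥ rate} → 0` as `n → ∞`. -/
def SupSmall0 (β : ℝ) (k : ℕ → ℕ) (a b coef : ℕ → ℝ)
    (σhat : ∀ n, Adj n → Fin n → Fin (k n)) : Prop :=
  ∀ ε' : ℝ, 0 < ε' → ∀ᶠ n in atTop,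
    ∀ p ∈ Theta0 n (k n) (a n) (b n) β,
      prob (pMat p.1 p.2)
        { A | rate β n (k n) (a n) (b n) (coef n) ≤ misclass (σhat n A) p.2 }
        ≤ ε'

/-- `sup_{(B,σ)∈Θ} P{ℓ(σ,σ̂) ≥ rate} → 0` as `n → ∞`. -/
def SupSmallGen (β α : ℝ) (k : ℕ → ℕ) (a b lam coef : ℕ → ℝ)
    (σhat : ∀ n, Adj n → Fin n → Fin (k n)) : Prop :=
  ∀ ε' : ℝ, 0 < ε' → ∀ᶠ n in atTop,
    ∀ p ∈ ThetaGen n (k n) (a n) (b n) (lam n) β α,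
      prob (pMat p.1 p.2)
        { A | rate β n (k n) (a n) (b n) (coef n) ≤ misclass (σhat n A) p.2 }
        ≤ ε'

/-- The running assumption `0 < b < a ≤ (1−ε) n`. -/
def Baseline (ε : ℝ) (n : ℕ) (a b : ℝ) : Prop :=
  0 < b ∧ b < a ∧ a ≤ (1 - ε) * n

/-- `a ≍ b`. -/
def Comparable (a b : ℕ → ℝ) : Prop :=
  ∃ c1 c2 : ℝ, 0 < c1 ∧ ∀ n, c1 * b n ≤ a n ∧ a n ≤ c2 * b n

/-- The constant `C_ε`. -/
def Ceps (ε : ℝ) : ℝ := (10 / 3) * ((2 - ε) / ((ε / 2) * Real.log (2 / ε)))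

/-- The constant `c_ε`. -/
def ceps (ε : ℝ) : ℝ := min (1 / (10 * Ceps ε)) (ε / (2 - ε))

/-- The maximal entry `p_max` of a matrix. -/
def pmax {n : ℕ} (P : Matrix (Fin n) (Fin n) ℝ) : ℝ :=
  sSup { x : ℝ | ∃ u v, x = P u v }

/-- The matrix agreeing with `M` on `J × J` and zero elsewhere. -/
def restrictM {n : ℕ} (M : Matrix (Fin n) (Fin n) ℝ) (J : Finset (Fin n)) :
    Matrix (Fin n) (Fin n) ℝ :=
  fun u v => if u ∈ J ∧ v ∈ J then M u v else 0

/-- The real-valued adjacency matrix. -/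
def adjMat {n : ℕ} (A : Adj n) : Matrix (Fin n) (Fin n) ℝ := fun u v => aVal A u v

end

end SBM

namespace SBM

open Filter

theorem sqnorm_mul_self {n : ℕ} (x : Fin n → ℝ) : sqnorm x * sqnorm x = ∑ i, x i ^ 2 :=
  Real.mul_self_sqrt (Finset.sum_nonneg fun _ _ => sq_nonneg _)

theorem sqnorm_pos {n : ℕ} {x : Fin n → ℝ} (hx : x ≠ 0) : 0 < sqnorm x := by
  obtain ⟨i, hi⟩ := Function.ne_iff.mp hx
  exact Real.sqrt_pos.mpr <| Finset.sum_pos' (fun _ _ => sq_nonneg _)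
    ⟨i, Finset.mem_univ i, sq_pos_of_ne_zero hi⟩

/-- A matrix is bounded by its Frobenius norm. -/
theorem sqnorm_mulVec_le {n : ℕ} (M : Matrix (Fin n) (Fin n) ℝ) (x : Fin n → ℝ) :
    sqnorm (M.mulVec x) ≤ Real.sqrt (∑ u, ∑ v, M u v ^ 2) * sqnorm x := by
  rw [sqnorm, sqnorm, ← Real.sqrt_mul (by positivity), Finset.sum_mul]
  exact Real.sqrt_le_sqrt <| Finset.sum_le_sum fun u _ =>
    Finset.sum_mul_sq_le_sq_mul_sq Finset.univ (M u) x

theorem le_kthSingular {n k : ℕ} (hk : 0 < k) {M : Matrix (Fin n) (Fin n) ℝ} {t : ℝ}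
    (ht : 0 ≤ t) (V : Submodule ℝ (Fin n → ℝ)) (hV : Module.finrank ℝ V = k)
    (h : ∀ x ∈ V, t * sqnorm x ≤ sqnorm (M.mulVec x)) : t ≤ kthSingular M k := by
  refine le_csSup ⟨Real.sqrt (∑ u, ∑ v, M u v ^ 2), ?_⟩ ⟨ht, V, hV, h⟩
  rintro s ⟨-, W, hW, hs⟩
  obtain ⟨x, hxW, hx⟩ := W.exists_mem_ne_zero_of_ne_bot <| by
    rintro rfl
    simp at hW
    omega
  exact le_of_mul_le_mul_right ((hs x hxW).trans (sqnorm_mulVec_le M x)) (sqnorm_pos hx)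

/-- A lower bound on the quadratic form of a matrix at `x` bounds the norm of the image of `x`. -/
theorem mul_sqnorm_le_of_quadratic {n : ℕ} {M : Matrix (Fin n) (Fin n) ℝ} {x : Fin n → ℝ} {t : ℝ}
    (h : t * ∑ u, x u ^ 2 ≤ ∑ u, x u * M.mulVec x u) :
    t * sqnorm x ≤ sqnorm (M.mulVec x) := by
  rcases eq_or_ne x 0 with rfl | hx
  · simp [sqnorm]
  · have hcs : ∑ u, x u * M.mulVec x u ≤ sqnorm x * sqnorm (M.mulVec x) :=
      Real.sum_mul_le_sqrt_mul_sqrt _ _ _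
    refine le_of_mul_le_mul_left ?_ (sqnorm_pos hx)
    rw [← sqnorm_mul_self] at h
    linarith

theorem pMat_mulVec_comp {n k : ℕ} {p q : ℝ} {B : Matrix (Fin k) (Fin k) ℝ} (σ : Fin n → Fin k)
    (hdiag : ∀ i, B i i = p) (hoff : ∀ i j, i ≠ j → B i j = q) (y : Fin k → ℝ) (u : Fin n) :
    (pMat B σ).mulVec (y ∘ σ) u
      = q * ∑ v, y (σ v) + (p - q) * (comSize σ (σ u) * y (σ u)) := by
  have hterm : ∀ v, B (σ u) (σ v) * y (σ v)
      = q * y (σ v) + (p - q) * (if σ v = σ u then y (σ u) else 0) := by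
    intro v
    split_ifs with h
    · rw [h, hdiag]; ring
    · rw [hoff _ _ (Ne.symm h)]; ring
  simp only [Matrix.mulVec, dotProduct, pMat, Function.comp_apply, hterm]
  rw [Finset.sum_add_distrib, ← Finset.mul_sum, ← Finset.mul_sum, ← Finset.sum_filter,
    Finset.sum_const, nsmul_eq_mul, comSize]

/-- Proposition 1 (lower bound on the k-th singular value of `P` over Θ₀). -/
theorem statement_12
    (n k : ℕ) (a b β : ℝ) (hβ : 1 ≤ β)
    (hb : 0 < b) (hba : b < a) (han : a ≤ n)
    (B : Matrix (Fin k) (Fin k) ℝ) (σ : Fin n → Fin k)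
    (hmem : (B, σ) ∈ Theta0 n k a b β)
    (hn : 2 * β * k ≤ (n : ℝ)) :
    (a - b) / (2 * β * k) ≤ kthSingular (pMat B σ) k := by
  obtain ⟨hsize, hdiag, hoff⟩ := hmem
  have hn0 : (0 : ℝ) < n := by linarith
  have hk : 0 < k := (σ ⟨0, by exact_mod_cast hn0⟩).pos
  have hk0 : (0 : ℝ) < k := by exact_mod_cast hk
  have hd : 0 < 2 * β * k := by positivity
  have hcom : ∀ i, (n : ℝ) / (2 * β * k) ≤ comSize σ i := by
    intro i
    have h1 : 1 ≤ (n : ℝ) / (2 * β * k) := (one_le_div hd).mpr hn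
    have h2 : (n : ℝ) / (β * k) = 2 * ((n : ℝ) / (2 * β * k)) := by field_simp
    have h3 := (hsize i).1
    simp only at h3
    linarith
  have hsurj : Function.Surjective σ := by
    intro i
    have hpos : 0 < comSize σ i := lt_of_lt_of_le (by positivity) (hcom i)
    obtain ⟨u, hu⟩ := Finset.card_pos.mp (Nat.cast_pos.mp hpos)
    exact ⟨u, (Finset.mem_filter.mp hu).2⟩
  refine le_kthSingular hk (div_nonneg (by linarith) hd.le)
    (LinearMap.range (LinearMap.funLeft ℝ ℝ σ)) ?_ ?_
  · rw [LinearMap.finrank_range_of_inj (LinearMap.funLeft_injective_of_surjective ℝ ℝ σ hsurj)]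
    simp
  · rintro _ ⟨y, rfl⟩
    apply mul_sqnorm_le_of_quadratic
    change _ * ∑ u, y (σ u) ^ 2 ≤ ∑ u, y (σ u) * (pMat B σ).mulVec (y ∘ σ) u
    simp only [pMat_mulVec_comp σ hdiag hoff]
    have hS : 0 ≤ ∑ u, y (σ u) * (b / n * ∑ v, y (σ v)) := by
      rw [← Finset.sum_mul]
      have := mul_nonneg (div_nonneg hb.le hn0.le) (mul_self_nonneg (∑ v, y (σ v)))
      linarith
    have hterm : ∀ u, (a - b) / (2 * β * k) * y (σ u) ^ 2
        ≤ y (σ u) * ((a / n - b / n) * (comSize σ (σ u) * y (σ u))) := by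
      intro u
      have h : (a - b) / n * ((n : ℝ) / (2 * β * k)) ≤ (a - b) / n * comSize σ (σ u) :=
        mul_le_mul_of_nonneg_left (hcom _) (div_nonneg (by linarith) hn0.le)
      rw [div_mul_div_cancel₀ hn0.ne'] at h
      calc _ ≤ (a - b) / n * comSize σ (σ u) * y (σ u) ^ 2 :=
            mul_le_mul_of_nonneg_right h (sq_nonneg _)
        _ = _ := by ring
    simp only [mul_add, Finset.sum_add_distrib]
    rw [Finset.mul_sum]
    linarith [Finset.sum_le_sum fun u (_ : u ∈ Finset.univ) => hterm u]

end SBM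
end

section
/- Let A ∈ {0,1}^{n×n} be a random symmetric adjacency matrix with zero diagonal such that A_{uv} ~ Bernoulli(P_{uv}) independently for all u > v, where P ∈ [0,1]^{n×n} is symmetric, and set p_max = max over u ≥ v of P_{uv}. For any C' > 0 there exist constants C > 0 and sufficiently large constants C1 < C2 such that, with probability at least 1 − n^{−C'}, simultaneously for all τ ∈ [C1·(n·p_max + 1), C2·(n·p_max + 1)], the operator norm bound ‖T_τ(A) − P‖ ≤ C·√(n·p_max + 1) holds. -/
open scoped BigOperators
open Filter

namespace SBM

open Filter

/-- A double sum over all ordered pairs, folded onto the pairs above the diagonal. -/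
lemma sum_eq_sum_lt_add_diag {n : ℕ} (h : Fin n → Fin n → ℝ) :
    ∑ u, ∑ v, h u v =
      (∑ u, ∑ v, if u < v then h u v + h v u else 0) + ∑ u, h u u := by
  have key : ∀ u v : Fin n, h u v =
      (if u < v then h u v else 0) + (if v < u then h u v else 0) +
        (if u = v then h u v else 0) := by
    intro u v
    rcases lt_trichotomy u v with huv | huv | huv
    · simp [huv, huv.ne, huv.not_gt]
    · simp [huv]
    · simp [huv, huv.ne', huv.not_gt]
  have hswap : ∑ u, ∑ v, (if v < u then h u v else 0) =
      ∑ u, ∑ v, (if u < v then h v u else 0) := Finset.sum_comm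
  calc ∑ u, ∑ v, h u v
      = ∑ u, ∑ v, ((if u < v then h u v else 0) + (if v < u then h u v else 0) +
        (if u = v then h u v else 0)) :=
          Finset.sum_congr rfl fun u _ => Finset.sum_congr rfl fun v _ => key u v
    _ = _ := by
        simp only [Finset.sum_add_distrib]
        rw [hswap]
        congr 1
        · rw [← Finset.sum_add_distrib]
          refine Finset.sum_congr rfl fun u _ => ?_
          rw [← Finset.sum_add_distrib]
          refine Finset.sum_congr rfl fun v _ => ?_
          split_ifs <;> simp
        · simp

/-- Adjacency matrices of simple undirected graphs. -/
abbrev IsGraph {n : ℕ} (A : Adj n) : Prop :=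
  (∀ u, A u u = false) ∧ (∀ u v, A u v = A v u)

/-- Summing a product over the edges of all simple graphs gives a product of sums. -/
lemma sum_graph_prod {n : ℕ} (g : Fin n → Fin n → Bool → ℝ) :
    ∑ A : Adj n, (if (∀ u, A u u = false) ∧ (∀ u v, A u v = A v u) then
        ∏ u, ∏ v, (if u < v then g u v (A u v) else 1) else 0) =
      ∏ u, ∏ v, if u < v then g u v true + g u v false else 1 := by
  classical
  set t : Fin n × Fin n → Finset Bool :=
    fun e => if e.1 < e.2 then Finset.univ else {false} with ht
  have h1 := Finset.prod_univ_sum t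
    (fun e b => if e.1 < e.2 then g e.1 e.2 b else (1 : ℝ))
  have h2 : ∏ e : Fin n × Fin n,
        ∑ b ∈ t e, (if e.1 < e.2 then g e.1 e.2 b else (1 : ℝ)) =
      ∏ u, ∏ v, if u < v then g u v true + g u v false else 1 := by
    rw [Fintype.prod_prod_type]
    refine Finset.prod_congr rfl fun u _ => Finset.prod_congr rfl fun v _ => ?_
    by_cases huv : u < v <;> simp [ht, huv]
  rw [← h2, h1, ← Finset.sum_filter]
  refine Finset.sum_nbij' (fun A e => if e.1 < e.2 then A e.1 e.2 else false)
    (fun B u v => if u < v then B (u, v) else if v < u then B (v, u) else false)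
    ?_ ?_ ?_ ?_ ?_
  · intro A _
    rw [Fintype.mem_piFinset]
    intro e
    by_cases he : e.1 < e.2 <;> simp [ht, he]
  · intro B _
    simp only [Finset.mem_filter, Finset.mem_univ, true_and]
    refine ⟨fun u => by simp, fun u v => ?_⟩
    rcases lt_trichotomy u v with huv | huv | huv
    · simp [huv, huv.not_gt]
    · simp [huv]
    · simp [huv, huv.not_gt]
  · intro A hA
    simp only [Finset.mem_filter, Finset.mem_univ, true_and] at hA
    funext u v
    rcases lt_trichotomy u v with huv | huv | huv
    · simp [huv]
    · subst huv; simp [hA.1 u]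
    · simp [huv, huv.not_gt, hA.2 u v]
  · intro B hB
    rw [Fintype.mem_piFinset] at hB
    funext e
    by_cases he : e.1 < e.2
    · simp [he]
    · have := hB e
      simp only [ht, he, if_false, Finset.mem_singleton] at this
      simp [he, this]
  · intro A _
    rw [Fintype.prod_prod_type]
    refine Finset.prod_congr rfl fun u _ => Finset.prod_congr rfl fun v _ => ?_
    by_cases huv : u < v <;> simp [huv]

lemma weight_nonneg {n : ℕ} {P : Matrix (Fin n) (Fin n) ℝ}
    (hP : ∀ u v, 0 ≤ P u v ∧ P u v ≤ 1) (A : Adj n) : 0 ≤ weight P A := by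
  unfold weight
  split_ifs
  · refine Finset.prod_nonneg fun u _ => Finset.prod_nonneg fun v _ => ?_
    have := hP u v
    split_ifs <;> linarith
  · exact le_rfl

lemma weight_eq_zero_of_not_isGraph {n : ℕ} {P : Matrix (Fin n) (Fin n) ℝ}
    {A : Adj n} (hA : ¬ IsGraph A) : weight P A = 0 := if_neg hA

lemma sum_weight_eq_one {n : ℕ} (P : Matrix (Fin n) (Fin n) ℝ) :
    ∑ A, weight P A = 1 := by
  have h := sum_graph_prod (fun u v b => if b then P u v else 1 - P u v)
  simp only [if_true, Bool.false_eq_true, if_false, add_sub_cancel, ite_self,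
    Finset.prod_const_one] at h
  exact h

/-- The moment generating function of a linear statistic of the edges. -/
lemma sum_weight_mul_exp {n : ℕ} (P : Matrix (Fin n) (Fin n) ℝ)
    (b : Fin n → Fin n → ℝ) :
    ∑ A, weight P A * Real.exp (∑ u, ∑ v, b u v * aVal A u v) =
      ∏ u, ∏ v, if u < v then P u v * Real.exp (b u v + b v u) + (1 - P u v) else 1 := by
  have h := sum_graph_prod
    (fun u v e => if e then P u v * Real.exp (b u v + b v u) else 1 - P u v)
  simp only [if_true, Bool.false_eq_true, if_false] at h
  rw [← h]
  refine Finset.sum_congr rfl fun A _ => ?_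
  by_cases hA : IsGraph A
  · unfold weight
    rw [if_pos hA, if_pos hA, sum_eq_sum_lt_add_diag]
    have hdiag : ∑ u, b u u * aVal A u u = 0 :=
      Finset.sum_eq_zero fun u _ => by simp [aVal, hA.1 u]
    rw [hdiag, add_zero, Real.exp_sum, ← Finset.prod_mul_distrib]
    refine Finset.prod_congr rfl fun u _ => ?_
    rw [Real.exp_sum, ← Finset.prod_mul_distrib]
    refine Finset.prod_congr rfl fun v _ => ?_
    by_cases huv : u < v
    · simp only [huv, if_true, aVal, hA.2 v u]
      by_cases hE : A u v <;> simp [hE]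
    · simp [huv]
  · rw [weight_eq_zero_of_not_isGraph hA, zero_mul, if_neg hA]

/-- Poissonian bound for the moment generating function of a linear statistic. -/
lemma sum_weight_mul_exp_le {n : ℕ} {P : Matrix (Fin n) (Fin n) ℝ}
    (hs : ∀ u v, P u v = P v u) (hP : ∀ u v, 0 ≤ P u v ∧ P u v ≤ 1)
    (b : Fin n → Fin n → ℝ) (hb : ∀ u, 0 ≤ b u u) :
    ∑ A, weight P A * Real.exp (∑ u, ∑ v, b u v * aVal A u v) ≤
      Real.exp ((∑ u, ∑ v, P u v * (Real.exp (2 * b u v) - 1)) / 2) := by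
  rw [sum_weight_mul_exp, sum_eq_sum_lt_add_diag]
  have hdiag : 0 ≤ ∑ u, P u u * (Real.exp (2 * b u u) - 1) :=
    Finset.sum_nonneg fun u _ => mul_nonneg (hP u u).1
      (by linarith [Real.one_le_exp (mul_nonneg zero_le_two (hb u))])
  refine le_trans ?_ (Real.exp_le_exp.2
    (div_le_div_of_nonneg_right (le_add_of_nonneg_right hdiag) zero_le_two))
  rw [Finset.sum_div, Real.exp_sum]
  refine Finset.prod_le_prod (fun u _ => Finset.prod_nonneg fun v _ => ?_) fun u _ => ?_
  · have := hP u v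
    split_ifs
    · exact add_nonneg (mul_nonneg this.1 (Real.exp_pos _).le) (by linarith)
    · exact zero_le_one
  rw [Finset.sum_div, Real.exp_sum]
  refine Finset.prod_le_prod (fun v _ => ?_) fun v _ => ?_
  · have := hP u v
    split_ifs
    · exact add_nonneg (mul_nonneg this.1 (Real.exp_pos _).le) (by linarith)
    · exact zero_le_one
  · split_ifs
    · rw [hs v u]
      have h1 := Real.add_one_le_exp ((P u v * (Real.exp (2 * b u v) - 1) +
        P u v * (Real.exp (2 * b v u) - 1)) / 2)
      refine le_trans ?_ h1
      have h2 : Real.exp (b u v + b v u) ≤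
          (Real.exp (2 * b u v) + Real.exp (2 * b v u)) / 2 := by
        rw [Real.exp_add, two_mul, two_mul, Real.exp_add, Real.exp_add]
        nlinarith [sq_nonneg (Real.exp (b u v) - Real.exp (b v u))]
      nlinarith [mul_le_mul_of_nonneg_left h2 (hP u v).1]
    · simp

/-- Exponential Markov inequality combined with a union bound over two families. -/
lemma one_sub_le_prob {n : ℕ} {P : Matrix (Fin n) (Fin n) ℝ}
    (hP : ∀ u v, 0 ≤ P u v ∧ P u v ≤ 1) {ι κ : Type*} {s : Finset ι} {t : Finset κ}
    {f : ι → Adj n → ℝ} {g : κ → Adj n → ℝ} {S : Set (Adj n)} {δ₁ δ₂ : ℝ}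
    (h₁ : ∑ i ∈ s, ∑ A, weight P A * Real.exp (f i A) ≤ δ₁)
    (h₂ : ∑ k ∈ t, ∑ A, weight P A * Real.exp (g k A) ≤ δ₂)
    (hS : ∀ A, IsGraph A → (∀ i ∈ s, f i A ≤ 0) → (∀ k ∈ t, g k A ≤ 0) → A ∈ S) :
    1 - (δ₁ + δ₂) ≤ prob P S := by
  refine (sub_le_sub_left (add_le_add h₁ h₂) 1).trans ?_
  rw [Finset.sum_comm, Finset.sum_comm (s := t), ← sum_weight_eq_one P,
    ← Finset.sum_add_distrib, ← Finset.sum_sub_distrib]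
  refine Finset.sum_le_sum fun A _ => ?_
  rw [← Finset.mul_sum, ← Finset.mul_sum]
  have hw := weight_nonneg hP A
  have hf : ∀ i ∈ s, 0 ≤ Real.exp (f i A) := fun i _ => (Real.exp_pos _).le
  have hg : ∀ k ∈ t, 0 ≤ Real.exp (g k A) := fun k _ => (Real.exp_pos _).le
  have hfs := Finset.sum_nonneg hf
  have hgs := Finset.sum_nonneg hg
  by_cases hA : A ∈ S
  · rw [Set.indicator_of_mem hA]
    nlinarith [mul_nonneg hw hfs, mul_nonneg hw hgs]
  · rw [Set.indicator_of_notMem hA]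
    by_cases hG : IsGraph A
    · have h1 : 1 ≤ (∑ i ∈ s, Real.exp (f i A)) + ∑ k ∈ t, Real.exp (g k A) := by
        by_contra! hlt
        refine hA (hS A hG (fun i hi => ?_) fun k hk => ?_)
        · by_contra! hpos
          have := Finset.single_le_sum hf hi
          linarith [Real.one_le_exp hpos.le]
        · by_contra! hpos
          have := Finset.single_le_sum hg hk
          linarith [Real.one_le_exp hpos.le]
      nlinarith [mul_le_mul_of_nonneg_left h1 hw]
    · simp [weight_eq_zero_of_not_isGraph hG]

/-- Entropy cost, at scale `i`, of a set of `m` nodes among `n`. -/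
noncomputable def ent (n i : ℕ) (m : ℝ) : ℝ := 3 * i * m + n * Real.exp (-(3 * i))

lemma ent_nonneg (n i : ℕ) {m : ℝ} (hm : 0 ≤ m) : 0 ≤ ent n i m := by
  unfold ent; positivity

lemma one_add_log_le_ent {n : ℕ} (hn : 1 ≤ n) (i : ℕ) {m : ℝ} (hm : 1 ≤ m) :
    1 + Real.log n ≤ ent n i m := by
  have hn0 : (0 : ℝ) < n := by exact_mod_cast hn
  have h1 := Real.add_one_le_exp (Real.log n - 3 * i)
  rw [sub_eq_add_neg, Real.exp_add, Real.exp_log hn0] at h1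
  have h2 : (3 * i : ℝ) * 1 ≤ 3 * i * m := mul_le_mul_of_nonneg_left hm (by positivity)
  unfold ent
  linarith

lemma sum_exp_neg_ent_le (n i : ℕ) :
    ∑ I : Finset (Fin n), Real.exp (-ent n i I.card) ≤ 1 := by
  have h1 : ∀ I : Finset (Fin n), Real.exp (-ent n i I.card) =
      Real.exp (-(n * Real.exp (-(3 * i)))) *
        (Real.exp (-(3 * i)) ^ I.card * 1 ^ (Fintype.card (Fin n) - I.card)) := by
    intro I
    rw [one_pow, mul_one, ← Real.exp_nat_mul, ← Real.exp_add]
    congr 1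
    unfold ent
    ring
  simp_rw [h1]
  rw [← Finset.mul_sum, Fintype.sum_pow_mul_eq_add_pow, Fintype.card_fin]
  have h2 : (Real.exp (-(3 * i)) + 1 : ℝ) ^ n ≤ Real.exp (n * Real.exp (-(3 * i))) := by
    rw [Real.exp_nat_mul]
    exact pow_le_pow_left₀ (by positivity) (Real.add_one_le_exp _) n
  calc _ ≤ Real.exp (-(n * Real.exp (-(3 * i)))) * Real.exp (n * Real.exp (-(3 * i))) :=
        mul_le_mul_of_nonneg_left h2 (Real.exp_pos _).le
    _ = 1 := by rw [← Real.exp_add]; simp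

lemma sum_nonempty_exp_neg_ent_le {n : ℕ} (hn : 1 ≤ n) (i : ℕ) {K : ℝ} (hK : 1 ≤ K) :
    ∑ I : Finset (Fin n) with I.Nonempty, Real.exp (-(K * ent n i I.card)) ≤
      Real.exp (-((K - 1) * (1 + Real.log n))) := by
  calc ∑ I : Finset (Fin n) with I.Nonempty, Real.exp (-(K * ent n i I.card))
      ≤ ∑ I : Finset (Fin n) with I.Nonempty,
          Real.exp (-((K - 1) * (1 + Real.log n))) * Real.exp (-ent n i I.card) := by
        refine Finset.sum_le_sum fun I hI => ?_
        rw [← Real.exp_add]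
        refine Real.exp_le_exp.2 ?_
        have hc : (1 : ℝ) ≤ I.card := by
          exact_mod_cast (Finset.mem_filter.1 hI).2.card_pos
        nlinarith [mul_le_mul_of_nonneg_left (one_add_log_le_ent hn i hc)
          (sub_nonneg.2 hK)]
    _ ≤ ∑ I : Finset (Fin n),
          Real.exp (-((K - 1) * (1 + Real.log n))) * Real.exp (-ent n i I.card) :=
        Finset.sum_le_sum_of_subset_of_nonneg (Finset.filter_subset _ _)
          fun _ _ _ => by positivity
    _ ≤ _ := by
        rw [← Finset.mul_sum]
        exact mul_le_of_le_one_right (Real.exp_pos _).le (sum_exp_neg_ent_le n i)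

lemma sum_weight_mul_exp_edgesBetween_le {n : ℕ} {P : Matrix (Fin n) (Fin n) ℝ}
    (hs : ∀ u v, P u v = P v u) (hP : ∀ u v, 0 ≤ P u v ∧ P u v ≤ 1) {δ : ℝ}
    (hδ : ∀ u v, P u v ≤ δ) {θ : ℝ} (hθ : 0 ≤ θ) (I J : Finset (Fin n)) :
    ∑ A, weight P A * Real.exp (θ * edgesBetween A I J) ≤
      Real.exp (δ * I.card * J.card * Real.exp (2 * θ) / 2) := by
  classical
  set b : Fin n → Fin n → ℝ := fun u v => if u ∈ I ∧ v ∈ J then θ else 0 with hb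
  have hb0 : ∀ u v, 0 ≤ b u v := fun u v => by
    simp only [hb]; split_ifs <;> simp [hθ]
  have h1 := sum_weight_mul_exp_le hs hP b fun u => hb0 u u
  have h2 : ∀ A : Adj n, ∑ u, ∑ v, b u v * aVal A u v = θ * edgesBetween A I J := by
    intro A
    unfold edgesBetween
    simp only [hb, ite_mul, zero_mul, ite_and, Finset.mul_sum]
    rw [← Finset.sum_subset (Finset.subset_univ I) fun u _ hu => by simp [hu]]
    refine Finset.sum_congr rfl fun u hu => ?_
    rw [← Finset.sum_subset (Finset.subset_univ J) fun v _ hv => by simp [hv]]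
    exact Finset.sum_congr rfl fun v hv => by simp [hu, hv]
  simp_rw [h2] at h1
  refine h1.trans (Real.exp_le_exp.2 (div_le_div_of_nonneg_right ?_ zero_le_two))
  have h3 : ∀ u v, P u v * (Real.exp (2 * b u v) - 1) ≤
      if u ∈ I then (if v ∈ J then δ * Real.exp (2 * θ) else 0) else 0 := by
    intro u v
    have hp := hP u v
    by_cases hu : u ∈ I <;> by_cases hv : v ∈ J <;> simp only [hb, hu, hv, and_true,
      and_false, if_true, if_false, mul_zero, Real.exp_zero, sub_self, le_refl]
    nlinarith [mul_le_mul_of_nonneg_right (hδ u v) (Real.exp_pos (2 * θ)).le]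
  refine (Finset.sum_le_sum fun u _ => Finset.sum_le_sum fun v _ => h3 u v).trans ?_
  have h4 : ∀ u, (∑ v, if u ∈ I then (if v ∈ J then δ * Real.exp (2 * θ) else 0) else 0) =
      if u ∈ I then (J.card : ℝ) * (δ * Real.exp (2 * θ)) else 0 := by
    intro u
    split_ifs <;> simp
  simp_rw [h4]
  simp only [Finset.sum_ite_mem, Finset.univ_inter, Finset.sum_const, nsmul_eq_mul]
  apply le_of_eq
  ring

lemma sum_weight_mul_exp_centered_le {n : ℕ} {P : Matrix (Fin n) (Fin n) ℝ}
    (hs : ∀ u v, P u v = P v u) (hP : ∀ u v, 0 ≤ P u v ∧ P u v ≤ 1)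
    (b : Fin n → Fin n → ℝ) (hdiag : ∀ u, b u u = 0) (hb : ∀ u v, |b u v| ≤ 1 / 2) :
    ∑ A, weight P A * Real.exp (∑ u, ∑ v, b u v * (aVal A u v - P u v)) ≤
      Real.exp (2 * ∑ u, ∑ v, P u v * b u v ^ 2) := by
  have h1 := sum_weight_mul_exp_le hs hP b fun u => (hdiag u).ge
  have h2 : ∀ A : Adj n, ∑ u, ∑ v, b u v * (aVal A u v - P u v) =
      ∑ u, ∑ v, b u v * aVal A u v + -∑ u, ∑ v, b u v * P u v := by
    intro A
    simp only [mul_sub, Finset.sum_sub_distrib]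
    ring
  simp_rw [h2, Real.exp_add, ← mul_assoc]
  rw [← Finset.sum_mul]
  refine (mul_le_mul_of_nonneg_right h1 (Real.exp_pos _).le).trans ?_
  rw [← Real.exp_add]
  refine Real.exp_le_exp.2 ?_
  rw [← sub_eq_add_neg, sub_le_iff_le_add, Finset.sum_div, Finset.mul_sum,
    ← Finset.sum_add_distrib]
  refine Finset.sum_le_sum fun u _ => ?_
  rw [Finset.sum_div, Finset.mul_sum, ← Finset.sum_add_distrib]
  refine Finset.sum_le_sum fun v _ => ?_
  have h3 : |2 * b u v| ≤ 1 := by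
    rw [abs_mul, abs_two]; linarith [hb u v]
  have h4 := (abs_le.1 (Real.abs_exp_sub_one_sub_id_le h3)).2
  nlinarith [mul_le_mul_of_nonneg_left h4 (hP u v).1]

/-- Integer points of the Euclidean ball of radius `4 √n`. -/
noncomputable def latticeBall (n : ℕ) : Finset (Fin n → ℤ) :=
  (Fintype.piFinset fun _ => Finset.Icc (-(4 * n : ℤ)) (4 * n)).filter
    fun z => ∑ u, z u ^ 2 ≤ 16 * n

lemma mem_latticeBall {n : ℕ} {z : Fin n → ℤ} :
    z ∈ latticeBall n ↔ ∑ u, z u ^ 2 ≤ 16 * n := by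
  unfold latticeBall
  rw [Finset.mem_filter, Fintype.mem_piFinset]
  refine ⟨fun h => h.2, fun h => ⟨fun u => ?_, h⟩⟩
  have h1 : z u ^ 2 ≤ 16 * n :=
    (Finset.single_le_sum (fun v _ => sq_nonneg (z v)) (Finset.mem_univ u)).trans h
  have hn : (1 : ℤ) ≤ n := by exact_mod_cast u.pos
  rw [Finset.mem_Icc]
  constructor <;> nlinarith

lemma sum_Icc_half_pow_natAbs_le (N : ℕ) :
    ∑ k ∈ Finset.Icc (-(N : ℤ)) N, (1 / 2 : ℝ) ^ k.natAbs ≤ 3 - 2 * (1 / 2) ^ N := by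
  induction N with
  | zero => norm_num
  | succ N ih =>
    have hsplit : Finset.Icc (-((N + 1 : ℕ) : ℤ)) ((N + 1 : ℕ) : ℤ) =
        insert (-((N + 1 : ℕ) : ℤ)) (insert ((N + 1 : ℕ) : ℤ) (Finset.Icc (-(N : ℤ)) N)) := by
      ext k
      simp only [Finset.mem_Icc, Finset.mem_insert]
      push_cast
      omega
    rw [hsplit, Finset.sum_insert, Finset.sum_insert]
    · rw [Int.natAbs_neg, Int.natAbs_natCast, pow_succ]
      linarith
    · simp
    · simp only [Finset.mem_insert, Finset.mem_Icc]
      push_cast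
      omega

lemma card_latticeBall_le (n : ℕ) : ((latticeBall n).card : ℝ) ≤ Real.exp (18 * n) := by
  have h3 : (3 : ℝ) ≤ Real.exp 2 := by
    linarith [Real.add_one_le_exp (2 : ℝ)]
  have hhalf : Real.exp (-1) ≤ 1 / 2 := by
    rw [Real.exp_neg, one_div]
    exact inv_anti₀ two_pos (by linarith [Real.add_one_le_exp (1 : ℝ)])
  calc ((latticeBall n).card : ℝ) = ∑ z ∈ latticeBall n, (1 : ℝ) := by simp
    _ ≤ ∑ z ∈ latticeBall n, Real.exp (16 * n) * ∏ u, (1 / 2 : ℝ) ^ (z u).natAbs := by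
        refine Finset.sum_le_sum fun z hz => ?_
        have h1 : (∑ u, (z u : ℝ) ^ 2) ≤ 16 * n := by
          exact_mod_cast mem_latticeBall.1 hz
        have h2 : Real.exp (-(16 * n)) ≤ ∏ u, (1 / 2 : ℝ) ^ (z u).natAbs := by
          calc Real.exp (-(16 * n)) ≤ Real.exp (∑ u, -((z u).natAbs : ℝ)) := by
                refine Real.exp_le_exp.2 ?_
                rw [Finset.sum_neg_distrib, neg_le_neg_iff]
                refine (Finset.sum_le_sum fun u _ => ?_).trans h1
                rw [Nat.cast_natAbs]
                exact_mod_cast Int.natAbs_le_self_sq (z u)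
            _ ≤ ∏ u, (1 / 2 : ℝ) ^ (z u).natAbs := by
                rw [Real.exp_sum]
                refine Finset.prod_le_prod (fun _ _ => (Real.exp_pos _).le) fun u _ => ?_
                rw [← mul_neg_one, Real.exp_nat_mul]
                exact pow_le_pow_left₀ (Real.exp_pos _).le hhalf _
        rw [Real.exp_neg] at h2
        rwa [← inv_le_iff_one_le_mul₀' (Real.exp_pos _)]
    _ ≤ ∑ z ∈ Fintype.piFinset (fun _ : Fin n => Finset.Icc (-(4 * n : ℤ)) (4 * n)),
          Real.exp (16 * n) * ∏ u, (1 / 2 : ℝ) ^ (z u).natAbs :=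
        Finset.sum_le_sum_of_subset_of_nonneg (Finset.filter_subset _ _)
          fun _ _ _ => by positivity
    _ = Real.exp (16 * n) *
          (∑ k ∈ Finset.Icc (-(4 * n : ℤ)) (4 * n), (1 / 2 : ℝ) ^ k.natAbs) ^ n := by
        rw [← Finset.mul_sum, ← Finset.prod_univ_sum (fun _ : Fin n =>
          Finset.Icc (-(4 * n : ℤ)) (4 * n)) (fun _ k => (1 / 2 : ℝ) ^ k.natAbs)]
        simp
    _ ≤ Real.exp (16 * n) * Real.exp 2 ^ n := by
        have h := sum_Icc_half_pow_natAbs_le (4 * n)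
        push_cast at h
        gcongr
        have : (0 : ℝ) < (1 / 2) ^ (4 * n) := by positivity
        linarith
    _ = Real.exp (18 * n) := by
        rw [← Real.exp_nat_mul, ← Real.exp_add]
        ring_nf

/-- Dyadic scale of a coordinate of an integer vector. -/
def scale {n : ℕ} (z : Fin n → ℤ) (u : Fin n) : ℕ := Nat.log 2 (z u).natAbs

lemma two_pow_scale_le {n : ℕ} {z : Fin n → ℤ} {u : Fin n} (hu : z u ≠ 0) :
    (2 : ℝ) ^ scale z u ≤ |(z u : ℝ)| := by
  have h := Nat.pow_log_le_self 2 (Int.natAbs_ne_zero.2 hu)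
  rw [← Int.cast_abs, ← Nat.cast_natAbs]
  exact_mod_cast h

lemma abs_le_two_pow_scale {n : ℕ} (z : Fin n → ℤ) (u : Fin n) :
    |(z u : ℝ)| ≤ 2 * 2 ^ scale z u := by
  have h := (Nat.lt_pow_succ_log_self one_lt_two (z u).natAbs).le
  rw [pow_succ'] at h
  rw [← Int.cast_abs, ← Nat.cast_natAbs]
  exact_mod_cast h

lemma four_pow_scale_le {n : ℕ} (z : Fin n → ℤ) (u : Fin n) :
    (4 : ℝ) ^ scale z u ≤ 1 + (z u : ℝ) ^ 2 := by
  by_cases hu : z u = 0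
  · simp [scale, hu]
  · have h := two_pow_scale_le hu
    rw [show (4 : ℝ) = 2 ^ 2 by norm_num, ← pow_mul, mul_comm, pow_mul, ← sq_abs (z u : ℝ)]
    have : ((2 : ℝ) ^ scale z u) ^ 2 ≤ |(z u : ℝ)| ^ 2 := pow_le_pow_left₀ (by positivity) h 2
    linarith

/-- Coefficients of the light pairs of two integer vectors. -/
noncomputable def lightCoef {n : ℕ} (q : ℕ) (z w : Fin n → ℤ) (u v : Fin n) : ℝ :=
  if u ≠ v ∧ scale z u + scale w v ≤ q then z u * w v / (8 * 2 ^ q) else 0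

lemma abs_lightCoef_le {n : ℕ} (q : ℕ) (z w : Fin n → ℤ) (u v : Fin n) :
    |lightCoef q z w u v| ≤ 1 / 2 := by
  unfold lightCoef
  split_ifs with h
  · rw [abs_div, abs_mul, abs_of_pos (by positivity : (0 : ℝ) < 8 * 2 ^ q),
      div_le_iff₀ (by positivity)]
    calc |(z u : ℝ)| * |(w v : ℝ)| ≤ (2 * 2 ^ scale z u) * (2 * 2 ^ scale w v) :=
          mul_le_mul (abs_le_two_pow_scale z u) (abs_le_two_pow_scale w v)
            (abs_nonneg _) (by positivity)
      _ = 4 * 2 ^ (scale z u + scale w v) := by rw [pow_add]; ring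
      _ ≤ 4 * 2 ^ q := by gcongr; exacts [one_le_two, h.2]
      _ = _ := by ring
  · norm_num

lemma lightCoef_sq_le {n : ℕ} (q : ℕ) (z w : Fin n → ℤ) (u v : Fin n) :
    lightCoef q z w u v ^ 2 ≤ (z u : ℝ) ^ 2 * (w v : ℝ) ^ 2 / (64 * 4 ^ q) := by
  unfold lightCoef
  split_ifs with h
  · apply le_of_eq
    rw [div_pow, mul_pow, mul_pow, ← pow_mul, mul_comm q, pow_mul]
    norm_num
  · rw [zero_pow two_ne_zero]
    positivity

lemma sum_sq_le_of_mem_latticeBall {n : ℕ} {z : Fin n → ℤ} (hz : z ∈ latticeBall n) :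
    ∑ u, (z u : ℝ) ^ 2 ≤ 16 * n := by
  exact_mod_cast mem_latticeBall.1 hz

lemma sum_sum_sq_mul_sq_le {n : ℕ} {z w : Fin n → ℤ} (hz : z ∈ latticeBall n)
    (hw : w ∈ latticeBall n) :
    ∑ u, ∑ v, (z u : ℝ) ^ 2 * (w v : ℝ) ^ 2 ≤ 256 * n ^ 2 := by
  rw [← Finset.sum_mul_sum]
  have h := mul_le_mul (sum_sq_le_of_mem_latticeBall hz) (sum_sq_le_of_mem_latticeBall hw)
    (Finset.sum_nonneg fun u _ => sq_nonneg _) (by positivity)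
  nlinarith

/-- The deterministic regularity properties of a graph used to bound its trimmed
adjacency matrix: a discrepancy property, and concentration of the light pairs. -/
structure Regular {n : ℕ} (P : Matrix (Fin n) (Fin n) ℝ) (d K : ℝ) (q : ℕ) (A : Adj n) :
    Prop where
  isGraph : IsGraph A
  discrepancy : ∀ i < 8 * n + 3, ∀ j < 8 * n + 3, ∀ r < 8 * n + 3,
    ∀ I J : Finset (Fin n), I.Nonempty → J.Nonempty →
      (r / 4 : ℝ) * edgesBetween A I J ≤
        d / n * I.card * J.card * Real.exp (2 * (r / 4)) / 2 +
          (K * ent n i I.card + K * ent n j J.card)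
  light : ∀ z ∈ latticeBall n, ∀ w ∈ latticeBall n,
    ∑ u, ∑ v, lightCoef q z w u v * (aVal A u v - P u v) ≤ (44 + K) * n

lemma sum_discrepancy_failure_le {n : ℕ} (hn : 1 ≤ n) {P : Matrix (Fin n) (Fin n) ℝ}
    (hs : ∀ u v, P u v = P v u) (hP : ∀ u v, 0 ≤ P u v ∧ P u v ≤ 1) {d K : ℝ}
    (hd : ∀ u v, P u v ≤ d / n) (hK : 1 ≤ K) (N : ℕ) :
    ∑ x ∈ (Finset.range N ×ˢ Finset.range N ×ˢ Finset.range N) ×ˢ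
        ((Finset.univ.filter fun I : Finset (Fin n) => I.Nonempty) ×ˢ
          (Finset.univ.filter fun I : Finset (Fin n) => I.Nonempty)),
      ∑ A, weight P A * Real.exp ((x.1.2.2 / 4 : ℝ) * edgesBetween A x.2.1 x.2.2 -
        (d / n * x.2.1.card * x.2.2.card * Real.exp (2 * (x.1.2.2 / 4)) / 2 +
          (K * ent n x.1.1 x.2.1.card + K * ent n x.1.2.1 x.2.2.card))) ≤
      (N : ℝ) ^ 3 * Real.exp (-((K - 1) * (1 + Real.log n))) ^ 2 := by
  calc _ ≤ ∑ x ∈ (Finset.range N ×ˢ Finset.range N ×ˢ Finset.range N) ×ˢ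
        ((Finset.univ.filter fun I : Finset (Fin n) => I.Nonempty) ×ˢ
          (Finset.univ.filter fun I : Finset (Fin n) => I.Nonempty)),
        Real.exp (-(K * ent n x.1.1 x.2.1.card)) *
          Real.exp (-(K * ent n x.1.2.1 x.2.2.card)) := by
        refine Finset.sum_le_sum fun x _ => ?_
        have h1 := sum_weight_mul_exp_edgesBetween_le hs hP hd
          (by positivity : (0 : ℝ) ≤ x.1.2.2 / 4) x.2.1 x.2.2
        simp_rw [sub_eq_add_neg, Real.exp_add, ← mul_assoc]
        rw [← Finset.sum_mul]
        refine (mul_le_mul_of_nonneg_right h1 (Real.exp_pos _).le).trans ?_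
        rw [← Real.exp_add, ← Real.exp_add]
        refine Real.exp_le_exp.2 (le_of_eq ?_)
        ring
    _ = ∑ y ∈ Finset.range N ×ˢ Finset.range N ×ˢ Finset.range N,
        (∑ I : Finset (Fin n) with I.Nonempty, Real.exp (-(K * ent n y.1 I.card))) *
          ∑ J : Finset (Fin n) with J.Nonempty, Real.exp (-(K * ent n y.2.1 J.card)) := by
        rw [Finset.sum_product]
        refine Finset.sum_congr rfl fun y _ => ?_
        rw [Finset.sum_product, Finset.sum_mul_sum]
    _ ≤ ∑ y ∈ Finset.range N ×ˢ Finset.range N ×ˢ Finset.range N,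
        Real.exp (-((K - 1) * (1 + Real.log n))) ^ 2 := by
        refine Finset.sum_le_sum fun y _ => ?_
        rw [sq]
        exact mul_le_mul (sum_nonempty_exp_neg_ent_le hn _ hK)
          (sum_nonempty_exp_neg_ent_le hn _ hK)
          (Finset.sum_nonneg fun _ _ => (Real.exp_pos _).le) (Real.exp_pos _).le
    _ = _ := by
        rw [Finset.sum_const, Finset.card_product, Finset.card_product, Finset.card_range,
          nsmul_eq_mul]
        push_cast
        ring

lemma sum_light_failure_le {n : ℕ} (hn : 1 ≤ n) {P : Matrix (Fin n) (Fin n) ℝ}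
    (hs : ∀ u v, P u v = P v u) (hP : ∀ u v, 0 ≤ P u v ∧ P u v ≤ 1) {d : ℝ} (K : ℝ)
    (hd : ∀ u v, P u v ≤ d / n) {q : ℕ} (hq : d ≤ 4 ^ q) :
    ∑ x ∈ latticeBall n ×ˢ latticeBall n, ∑ A, weight P A *
        Real.exp (∑ u, ∑ v, lightCoef q x.1 x.2 u v * (aVal A u v - P u v) - (44 + K) * n) ≤
      Real.exp (-(K * n)) := by
  have hn0 : (0 : ℝ) < n := by exact_mod_cast hn
  calc _ ≤ ∑ x ∈ latticeBall n ×ˢ latticeBall n, Real.exp (-((36 + K) * n)) := by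
        refine Finset.sum_le_sum fun x hx => ?_
        have hx' := Finset.mem_product.1 hx
        have h1 := sum_weight_mul_exp_centered_le hs hP (lightCoef q x.1 x.2)
          (fun u => by simp [lightCoef]) (abs_lightCoef_le q x.1 x.2)
        simp_rw [sub_eq_add_neg _ ((44 + K) * (n : ℝ)), Real.exp_add, ← mul_assoc]
        rw [← Finset.sum_mul]
        refine (mul_le_mul_of_nonneg_right h1 (Real.exp_pos _).le).trans ?_
        rw [← Real.exp_add]
        refine Real.exp_le_exp.2 ?_
        have h2 : ∑ u, ∑ v, P u v * lightCoef q x.1 x.2 u v ^ 2 ≤ 4 * n := by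
          calc _ ≤ ∑ u, ∑ v, (4 ^ q / n : ℝ) *
                ((x.1 u : ℝ) ^ 2 * (x.2 v : ℝ) ^ 2 / (64 * 4 ^ q)) := by
                refine Finset.sum_le_sum fun u _ => Finset.sum_le_sum fun v _ => ?_
                exact mul_le_mul ((hd u v).trans (by gcongr)) (lightCoef_sq_le q x.1 x.2 u v)
                  (sq_nonneg _) (by positivity)
            _ = (1 / (64 * n) : ℝ) * ∑ u, ∑ v, (x.1 u : ℝ) ^ 2 * (x.2 v : ℝ) ^ 2 := by
                simp only [Finset.mul_sum]
                refine Finset.sum_congr rfl fun u _ => Finset.sum_congr rfl fun v _ => ?_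
                field_simp
            _ ≤ (1 / (64 * n) : ℝ) * (256 * n ^ 2) :=
                mul_le_mul_of_nonneg_left (sum_sum_sq_mul_sq_le hx'.1 hx'.2) (by positivity)
            _ = 4 * n := by field_simp; norm_num
        linarith
    _ = ((latticeBall n).card : ℝ) * (latticeBall n).card * Real.exp (-((36 + K) * n)) := by
        rw [Finset.sum_const, Finset.card_product, nsmul_eq_mul]
        push_cast
        ring
    _ ≤ Real.exp (18 * n) * Real.exp (18 * n) * Real.exp (-((36 + K) * n)) := by
        gcongr <;> exact card_latticeBall_le n
    _ = Real.exp (-(K * n)) := by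
        rw [← Real.exp_add, ← Real.exp_add]
        ring_nf

/-- Random graphs are regular with polynomially small failure probability. -/
lemma one_sub_rpow_le_prob_regular {n : ℕ} (hn : 1 ≤ n) {P : Matrix (Fin n) (Fin n) ℝ}
    (hs : ∀ u v, P u v = P v u) (hP : ∀ u v, 0 ≤ P u v ∧ P u v ≤ 1) {d C' : ℝ}
    (hd : ∀ u v, P u v ≤ d / n) {q : ℕ} (hq : d ≤ 4 ^ q) (hC' : 0 < C') :
    1 - (n : ℝ) ^ (-C') ≤ prob P {A | Regular P d (C' + 12) q A} := by
  have hn0 : (0 : ℝ) < n := by exact_mod_cast hn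
  have hn1 : (1 : ℝ) ≤ n := by exact_mod_cast hn
  have hlog : 0 ≤ Real.log n := Real.log_nonneg hn1
  refine le_trans ?_ (one_sub_le_prob hP
    (sum_discrepancy_failure_le hn hs hP hd (by linarith : 1 ≤ C' + 12) (8 * n + 3))
    (sum_light_failure_le hn hs hP (C' + 12) hd hq) fun A hG hf hg => ?_)
  · have h3 : (((8 * n + 3 : ℕ) : ℝ)) ≤ Real.exp (3 * (1 + Real.log n)) := by
      have he : (11 : ℝ) ≤ Real.exp 3 := by
        have := Real.exp_one_gt_d9
        have h : Real.exp 3 = Real.exp 1 ^ 3 := by rw [← Real.exp_nat_mul]; norm_num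
        rw [h]
        nlinarith [pow_le_pow_left₀ (by norm_num : (0 : ℝ) ≤ 2.7)
          (by linarith : (2.7 : ℝ) ≤ Real.exp 1) 3]
      rw [mul_add, mul_one, Real.exp_add]
      have h4 : (n : ℝ) ≤ Real.exp (3 * Real.log n) := by
        nth_rewrite 1 [← Real.exp_log hn0]
        exact Real.exp_le_exp.2 (by linarith)
      push_cast
      nlinarith [mul_le_mul he h4 hn0.le (by positivity)]
    have h5 : (((8 * n + 3 : ℕ) : ℝ)) ^ 3 *
        Real.exp (-((C' + 12 - 1) * (1 + Real.log n))) ^ 2 ≤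
          Real.exp (-(1 + C' * Real.log n)) := by
      calc _ ≤ Real.exp (3 * (1 + Real.log n)) ^ 3 *
            Real.exp (-((C' + 12 - 1) * (1 + Real.log n))) ^ 2 := by gcongr
        _ = Real.exp (9 * (1 + Real.log n) - 2 * ((C' + 12 - 1) * (1 + Real.log n))) := by
            rw [← Real.exp_nat_mul, ← Real.exp_nat_mul, ← Real.exp_add]
            push_cast
            ring_nf
        _ ≤ _ := by
            refine Real.exp_le_exp.2 ?_
            nlinarith [mul_nonneg hC'.le hlog]
    have h6 : Real.exp (-((C' + 12) * n)) ≤ Real.exp (-(1 + C' * Real.log n)) := by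
      refine Real.exp_le_exp.2 (neg_le_neg ?_)
      have := Real.log_le_sub_one_of_pos hn0
      nlinarith [mul_le_mul_of_nonneg_left this hC'.le]
    have h7 : Real.exp (-(1 + C' * Real.log n)) ≤ (n : ℝ) ^ (-C') / 2 := by
      rw [Real.rpow_def_of_pos hn0, neg_add, Real.exp_add, div_eq_inv_mul, Real.exp_neg 1,
        show -(C' * Real.log n) = Real.log n * -C' by ring]
      refine mul_le_mul_of_nonneg_right ?_ (Real.exp_pos _).le
      exact inv_anti₀ two_pos (by linarith [Real.add_one_le_exp (1 : ℝ)])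
    linarith
  · refine ⟨hG, fun i hi j hj r hr I J hI hJ => ?_, fun z hz w hw => ?_⟩
    · have := hf ((i, j, r), (I, J)) (by simp [hi, hj, hr, hI, hJ])
      exact sub_nonpos.1 this
    · exact sub_nonpos.1 (hg (z, w) (Finset.mk_mem_product hz hw))

lemma sum_Icc_two_pow_div_le (m : ℕ) :
    ∑ r ∈ Finset.Icc 1 m, (2 : ℝ) ^ r / r ≤ 4 * 2 ^ m / m := by
  rcases Nat.lt_or_ge m 2 with hm | hm
  · interval_cases m <;> norm_num
  · induction m, hm using Nat.le_induction with
    | base => norm_num [Finset.sum_Icc_succ_top]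
    | succ m hm ih =>
      rw [Finset.sum_Icc_succ_top (by lia)]
      refine (add_le_add_left ih _).trans ?_
      have hm' : (2 : ℝ) ≤ m := by exact_mod_cast hm
      have hpow : (0 : ℝ) < 2 ^ m := by positivity
      push_cast
      rw [div_add_div _ _ (by positivity) (by positivity),
        div_le_div_iff₀ (by positivity) (by positivity), pow_succ]
      nlinarith [mul_nonneg hpow.le (by nlinarith : (0 : ℝ) ≤ (m + 1) * (2 * m - 4))]

/-- Pairs of scales at which the heavy pairs are controlled by discrepancy. -/
abbrev Balanced (q i j : ℕ) : Prop := q < i + j ∧ i < j + q ∧ j < i + q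

lemma sum_balanced_le (q i N : ℕ) :
    ∑ j ∈ Finset.range N, (if Balanced q i j then (2 : ℝ) ^ (i + j - q) / (i + j - q : ℕ) else 0) ≤
      2 * 4 ^ i / i := by
  calc _ = ∑ j ∈ (Finset.range N).filter (Balanced q i),
        (2 : ℝ) ^ (i + j - q) / (i + j - q : ℕ) := (Finset.sum_filter _ _).symm
    _ = ∑ r ∈ ((Finset.range N).filter (Balanced q i)).image (fun j => i + j - q),
        (2 : ℝ) ^ r / r := by
        rw [Finset.sum_image]
        intro j hj j' hj' h
        simp only [Finset.coe_filter, Set.mem_ofPred_eq] at hj hj'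
        dsimp only at h
        lia
    _ ≤ ∑ r ∈ Finset.Icc 1 (2 * i), (2 : ℝ) ^ r / r := by
        refine Finset.sum_le_sum_of_subset_of_nonneg (fun r hr => ?_) fun _ _ _ => by positivity
        obtain ⟨j, hj, rfl⟩ := Finset.mem_image.1 hr
        have := (Finset.mem_filter.1 hj).2
        rw [Finset.mem_Icc]
        lia
    _ ≤ 4 * 2 ^ (2 * i) / (2 * i : ℕ) := sum_Icc_two_pow_div_le _
    _ = 2 * 4 ^ i / i := by
        rw [pow_mul]
        push_cast
        rw [show (4 : ℝ) * (2 ^ 2) ^ i = 2 * (2 * 4 ^ i) by norm_num; ring,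
          mul_div_mul_left _ _ two_ne_zero]

lemma ent_mul_le (n i m : ℕ) :
    ent n i m * (2 * 4 ^ i / i) ≤ 6 * (m * 4 ^ i) + 2 * n * (1 / 2) ^ i := by
  rcases Nat.eq_zero_or_pos i with rfl | hi
  · simp
    positivity
  have hi' : (1 : ℝ) ≤ i := by exact_mod_cast hi
  have hexp : Real.exp (-(3 * i)) * 4 ^ i ≤ (1 / 2) ^ i := by
    have h : Real.exp (-(3 * i)) = (Real.exp (-3)) ^ i := by
      rw [← Real.exp_nat_mul]
      ring_nf
    rw [h, ← mul_pow]
    refine pow_le_pow_left₀ (by positivity) ?_ i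
    have h8 : (8 : ℝ) ≤ Real.exp 3 := by
      rw [show (3 : ℝ) = 1 + 1 + 1 by norm_num, Real.exp_add, Real.exp_add]
      have := Real.add_one_le_exp (1 : ℝ)
      nlinarith [mul_le_mul (by linarith : (2 : ℝ) ≤ Real.exp 1)
        (by linarith : (2 : ℝ) ≤ Real.exp 1)
        (by norm_num) (by positivity)]
    rw [Real.exp_neg]
    have := inv_anti₀ (by norm_num) h8
    linarith
  have hn : (0 : ℝ) ≤ n := by positivity
  unfold ent
  calc _ = 6 * (m * 4 ^ i) + 2 * n * (Real.exp (-(3 * i)) * 4 ^ i) / i := by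
        field_simp
        ring
    _ ≤ 6 * (m * 4 ^ i) + 2 * n * (Real.exp (-(3 * i)) * 4 ^ i) := by
        gcongr
        exact div_le_self (by positivity) hi'
    _ ≤ _ := by gcongr

lemma scale_le {n : ℕ} {z : Fin n → ℤ} (hz : z ∈ latticeBall n) (u : Fin n) :
    scale z u ≤ 4 * n := by
  have h1 : z u ^ 2 ≤ 16 * n :=
    (Finset.single_le_sum (f := fun u => z u ^ 2) (fun v _ => sq_nonneg _)
      (Finset.mem_univ u)).trans (mem_latticeBall.1 hz)
  have hn : (1 : ℤ) ≤ n := by have := u.2; lia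
  refine (Nat.log_le_self _ _).trans ?_
  have h2 : |z u| ≤ 4 * n := abs_le_of_sq_le_sq (by nlinarith) (by positivity)
  rw [Int.abs_eq_natAbs] at h2
  lia

lemma sum_four_pow_scale_le {n : ℕ} {z : Fin n → ℤ} (hz : z ∈ latticeBall n) :
    ∑ u, (4 : ℝ) ^ scale z u ≤ 17 * n := by
  refine (Finset.sum_le_sum fun u _ => four_pow_scale_le z u).trans ?_
  rw [Finset.sum_add_distrib]
  have := sum_sq_le_of_mem_latticeBall hz
  simp
  linarith

/-- The coordinates of an integer vector at a given dyadic scale. -/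
abbrev level {n : ℕ} (z : Fin n → ℤ) (i : ℕ) : Finset (Fin n) :=
  Finset.univ.filter fun u => scale z u = i

lemma sum_eq_sum_level {n : ℕ} {z : Fin n → ℤ} (hz : z ∈ latticeBall n) (f : Fin n → ℝ) :
    ∑ u, f u = ∑ i ∈ Finset.range (4 * n + 1), ∑ u ∈ level z i, f u :=
  (Finset.sum_fiberwise_of_maps_to
    (fun u _ => Finset.mem_range.2 (Nat.lt_succ_of_le (scale_le hz u))) f).symm

lemma sum_card_level_le {n : ℕ} {z : Fin n → ℤ} (hz : z ∈ latticeBall n) :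
    ∑ i ∈ Finset.range (4 * n + 1), (level z i).card * (4 : ℝ) ^ i ≤ 17 * n := by
  refine le_trans (le_of_eq ?_) (sum_four_pow_scale_le hz)
  rw [sum_eq_sum_level hz]
  refine Finset.sum_congr rfl fun i _ => ?_
  rw [Finset.sum_congr rfl fun u hu => by rw [(Finset.mem_filter.1 hu).2], Finset.sum_const,
    nsmul_eq_mul]

lemma sum_ent_level_le {n : ℕ} {z : Fin n → ℤ} (hz : z ∈ latticeBall n) :
    ∑ i ∈ Finset.range (4 * n + 1), ent n i (level z i).card * (2 * 4 ^ i / i) ≤ 106 * n := by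
  refine (Finset.sum_le_sum fun i _ => ent_mul_le n i _).trans ?_
  rw [Finset.sum_add_distrib, ← Finset.mul_sum, ← Finset.mul_sum]
  have h1 := sum_card_level_le hz
  have h2 : ∑ i ∈ Finset.range (4 * n + 1), (1 / 2 : ℝ) ^ i ≤ 2 := sum_geometric_two_le _
  have hn : (0 : ℝ) ≤ 2 * n := by positivity
  nlinarith [mul_le_mul_of_nonneg_left h2 hn]

lemma aVal_nonneg {n : ℕ} (A : Adj n) (u v : Fin n) : 0 ≤ aVal A u v := by
  unfold aVal
  split_ifs <;> norm_num

lemma Regular.two_pow_mul_edgesBetween_le {n : ℕ} {P : Matrix (Fin n) (Fin n) ℝ} {d K : ℝ}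
    {q : ℕ} {A : Adj n} (hA : Regular P d K q A) (hq : d ≤ 4 ^ q) (hK : 0 ≤ K) {i j : ℕ}
    (hi : i ≤ 4 * n) (hj : j ≤ 4 * n) (hij : Balanced q i j) (I J : Finset (Fin n)) :
    2 ^ (i + j) * edgesBetween A I J ≤ 2 ^ q * (2 / n * ((I.card * 4 ^ i) * (J.card * 4 ^ j)) +
      4 * K * (ent n i I.card + ent n j J.card) * (2 ^ (i + j - q) / (i + j - q : ℕ))) := by
  have hent1 := ent_nonneg n i (Nat.cast_nonneg I.card)
  have hent2 := ent_nonneg n j (Nat.cast_nonneg J.card)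
  rcases I.eq_empty_or_nonempty with rfl | hI
  · simp only [edgesBetween, Finset.sum_empty, mul_zero]
    positivity
  rcases J.eq_empty_or_nonempty with rfl | hJ
  · simp only [edgesBetween, Finset.sum_empty, Finset.sum_const_zero, mul_zero]
    positivity
  obtain ⟨r, hr⟩ : ∃ r, i + j = q + r := ⟨i + j - q, by lia⟩
  have hr1 : 1 ≤ r := by lia
  have hsub : i + j - q = r := by lia
  have h := hA.discrepancy i (by lia) j (by lia) r (by lia) I J hI hJ
  have hr1' : (1 : ℝ) ≤ r := by exact_mod_cast hr1
  have hexp : Real.exp (2 * (r / 4)) ≤ 2 ^ r := by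
    have h2 : Real.exp (1 / 2) ≤ 2 := by
      have h3 : Real.exp (1 / 2) * Real.exp (1 / 2) = Real.exp 1 := by
        rw [← Real.exp_add]
        norm_num
      nlinarith [Real.exp_one_lt_d9, Real.exp_pos (1 / 2)]
    calc Real.exp (2 * (r / 4)) = Real.exp (1 / 2) ^ r := by
          rw [← Real.exp_nat_mul]
          ring_nf
      _ ≤ 2 ^ r := pow_le_pow_left₀ (Real.exp_pos _).le h2 r
  rw [hsub, hr, pow_add, mul_assoc]
  have ha : (0 : ℝ) ≤ I.card := Nat.cast_nonneg _
  have hb : (0 : ℝ) ≤ J.card := Nat.cast_nonneg _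
  generalize (I.card : ℝ) = a at *
  generalize (J.card : ℝ) = b at *
  refine mul_le_mul_of_nonneg_left ?_ (by positivity)
  have h1 : d / n * a * b * Real.exp (2 * (r / 4)) ≤
      4 ^ q / n * a * b * 2 ^ r := by gcongr
  have h2 : (4 : ℝ) ^ q * (2 ^ r) ^ 2 = 4 ^ i * 4 ^ j := by
    rw [← pow_add, hr, pow_add, ← pow_mul, mul_comm r, pow_mul]
    norm_num
  have h4 : edgesBetween A I J ≤ (4 / r) * (4 ^ q / n * a * b * 2 ^ r / 2 +
      (K * ent n i a + K * ent n j b)) := by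
    have h5 : edgesBetween A I J = (4 / r) * ((r / 4) * edgesBetween A I J) := by field_simp
    rw [h5]
    exact mul_le_mul_of_nonneg_left (by linarith) (by positivity)
  calc 2 ^ r * edgesBetween A I J ≤ 2 ^ r * ((4 / r) * (4 ^ q / n * a * b * 2 ^ r / 2 +
        (K * ent n i a + K * ent n j b))) :=
        mul_le_mul_of_nonneg_left h4 (by positivity)
    _ = (2 / n * (a * b * (4 ^ q * (2 ^ r) ^ 2))) / r +
        4 * K * (ent n i a + ent n j b) * (2 ^ r / r) := by ring
    _ ≤ (2 / n * (a * b * (4 ^ q * (2 ^ r) ^ 2))) +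
        4 * K * (ent n i a + ent n j b) * (2 ^ r / r) := by
        gcongr
        exact div_le_self (by positivity) hr1'
    _ = _ := by
        rw [h2]
        ring

lemma Regular.sum_balanced_pairs_le {n : ℕ} {P : Matrix (Fin n) (Fin n) ℝ} {d K : ℝ}
    {q : ℕ} {A : Adj n} (hA : Regular P d K q A) (hq : d ≤ 4 ^ q) (hK : 0 ≤ K)
    {z w : Fin n → ℤ} (hz : z ∈ latticeBall n) (hw : w ∈ latticeBall n) :
    ∑ u, ∑ v, (if Balanced q (scale z u) (scale w v) then
        2 ^ (scale z u + scale w v) * aVal A u v else 0) ≤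
      (578 + 848 * K) * (n * 2 ^ q) := by
  set R := Finset.range (4 * n + 1)
  set G : ℕ → ℕ → ℝ := fun i j =>
    if Balanced q i j then (2 : ℝ) ^ (i + j - q) / (i + j - q : ℕ) else 0 with hG
  set E : (Fin n → ℤ) → ℕ → ℝ := fun z i => ent n i (level z i).card with hE
  have hGsymm : ∀ i j, G i j = G j i := fun i j => by
    simp only [hG, add_comm i j]
    refine if_congr ?_ rfl rfl
    unfold Balanced
    lia
  have hGE : ∀ {x : Fin n → ℤ}, x ∈ latticeBall n → ∑ i ∈ R, ∑ j ∈ R, E x i * G i j ≤ 106 * n := by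
    intro x hx
    refine le_trans (Finset.sum_le_sum fun i _ => ?_) (sum_ent_level_le hx)
    rw [← Finset.mul_sum]
    exact mul_le_mul_of_nonneg_left (sum_balanced_le q i _) (ent_nonneg _ _ (Nat.cast_nonneg _))
  calc _ = ∑ i ∈ R, ∑ j ∈ R, if Balanced q i j then
        2 ^ (i + j) * edgesBetween A (level z i) (level w j) else 0 := by
        rw [sum_eq_sum_level hz]
        refine Finset.sum_congr rfl fun i _ => ?_
        simp_rw [sum_eq_sum_level hw]
        rw [Finset.sum_comm]
        refine Finset.sum_congr rfl fun j _ => ?_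
        rw [edgesBetween]
        split_ifs with hij
        · simp only [Finset.mul_sum]
          refine Finset.sum_congr rfl fun u hu => Finset.sum_congr rfl fun v hv => ?_
          rw [(Finset.mem_filter.1 hu).2, (Finset.mem_filter.1 hv).2, if_pos hij]
        · refine Finset.sum_eq_zero fun u hu => Finset.sum_eq_zero fun v hv => ?_
          rw [(Finset.mem_filter.1 hu).2, (Finset.mem_filter.1 hv).2, if_neg hij]
    _ ≤ ∑ i ∈ R, ∑ j ∈ R, 2 ^ q * (2 / n * (((level z i).card * 4 ^ i) *
          ((level w j).card * 4 ^ j)) + 4 * K * (E z i * G i j + E w j * G j i)) := by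
        refine Finset.sum_le_sum fun i hi => Finset.sum_le_sum fun j hj => ?_
        rw [← hGsymm i j, ← add_mul, ← mul_assoc (4 * K)]
        simp only [hG]
        split_ifs with hij
        · exact hA.two_pow_mul_edgesBetween_le hq hK (Nat.lt_succ_iff.1 (Finset.mem_range.1 hi))
            (Nat.lt_succ_iff.1 (Finset.mem_range.1 hj)) hij _ _
        · rw [mul_zero, add_zero]
          positivity
    _ = 2 ^ q * (2 / n * ((∑ i ∈ R, (level z i).card * (4 : ℝ) ^ i) *
          ∑ j ∈ R, (level w j).card * (4 : ℝ) ^ j) +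
          4 * K * (∑ i ∈ R, ∑ j ∈ R, E z i * G i j + ∑ j ∈ R, ∑ i ∈ R, E w j * G j i)) := by
        rw [Finset.sum_comm (f := fun j i => E w j * G j i), Finset.sum_mul_sum]
        simp only [mul_add, Finset.mul_sum, Finset.sum_add_distrib]
    _ ≤ 2 ^ q * (2 / n * ((17 * n) * (17 * n)) + 4 * K * (106 * n + 106 * n)) := by
        refine mul_le_mul_of_nonneg_left (add_le_add (mul_le_mul_of_nonneg_left ?_ ?_)
          (mul_le_mul_of_nonneg_left (add_le_add (hGE hz) (hGE hw)) ?_)) (by positivity)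
        · exact mul_le_mul (sum_card_level_le hz) (sum_card_level_le hw)
            (Finset.sum_nonneg fun i _ => mul_nonneg (Nat.cast_nonneg _) (by positivity))
            (by positivity)
        · positivity
        · positivity
    _ = _ := by
        rcases Nat.eq_zero_or_pos n with rfl | hn
        · simp
        · have : (n : ℝ) ≠ 0 := by positivity
          field_simp
          ring

lemma Regular.sum_heavy_le {n : ℕ} {P : Matrix (Fin n) (Fin n) ℝ} {d K B : ℝ}
    {q : ℕ} {A : Adj n} (hA : Regular P d K q A) (hq : d ≤ 4 ^ q) (hK : 0 ≤ K) (hB : 0 ≤ B)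
    {z w : Fin n → ℤ} (hz : z ∈ latticeBall n) (hw : w ∈ latticeBall n) {S : Finset (Fin n)}
    (hS : ∀ u ∈ S, degree A u ≤ B * 4 ^ q) :
    ∑ u, ∑ v, (if (u ∈ S ∧ v ∈ S) ∧ q < scale z u + scale w v then
        2 ^ (scale z u + scale w v) * aVal A u v else 0) ≤
      (34 * B + 578 + 848 * K) * (n * 2 ^ q) := by
  have hdeg : ∀ {x : Fin n → ℤ}, x ∈ latticeBall n →
      ∑ u, ∑ v, (if u ∈ S then 4 ^ scale x u / 2 ^ q * aVal A u v else 0) ≤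
        17 * B * (n * 2 ^ q) := by
    intro x hx
    calc _ ≤ ∑ u, B * 2 ^ q * 4 ^ scale x u := by
          refine Finset.sum_le_sum fun u _ => ?_
          split_ifs with hu
          · rw [← Finset.mul_sum]
            refine (mul_le_mul_of_nonneg_left (hS u hu) (by positivity)).trans (le_of_eq ?_)
            rw [show (4 : ℝ) ^ q = 2 ^ q * 2 ^ q by rw [← mul_pow]; norm_num]
            field_simp
          · rw [Finset.sum_const_zero]
            positivity
      _ = B * 2 ^ q * ∑ u, 4 ^ scale x u := (Finset.mul_sum _ _ _).symm
      _ ≤ B * 2 ^ q * (17 * n) := by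
          gcongr
          exact sum_four_pow_scale_le hx
      _ = _ := by ring
  have hpt : ∀ i j : ℕ, j + q ≤ i → (2 : ℝ) ^ (i + j) ≤ 4 ^ i / 2 ^ q := by
    intro i j hij
    rw [le_div_iff₀ (by positivity), ← pow_add, show (4 : ℝ) = 2 ^ 2 by norm_num, ← pow_mul]
    exact pow_le_pow_right₀ one_le_two (by lia)
  calc _ ≤ ∑ u, ∑ v, ((if u ∈ S then 4 ^ scale z u / 2 ^ q * aVal A u v else 0) +
        (if v ∈ S then 4 ^ scale w v / 2 ^ q * aVal A v u else 0) +
        (if Balanced q (scale z u) (scale w v) then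
          2 ^ (scale z u + scale w v) * aVal A u v else 0)) := by
        refine Finset.sum_le_sum fun u _ => Finset.sum_le_sum fun v _ => ?_
        have ha := aVal_nonneg A u v
        have hsymm : aVal A v u = aVal A u v := by rw [aVal, aVal, hA.isGraph.2]
        have h1 : 0 ≤ if u ∈ S then 4 ^ scale z u / 2 ^ q * aVal A u v else 0 := by
          split_ifs <;> positivity
        have h2 : 0 ≤ if v ∈ S then 4 ^ scale w v / 2 ^ q * aVal A v u else 0 := by
          rw [hsymm]
          split_ifs <;> positivity
        have h3 : 0 ≤ if Balanced q (scale z u) (scale w v) then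
            2 ^ (scale z u + scale w v) * aVal A u v else 0 := by
          split_ifs <;> positivity
        by_cases h : (u ∈ S ∧ v ∈ S) ∧ q < scale z u + scale w v
        · rw [if_pos h]
          by_cases hi : scale w v + q ≤ scale z u
          · have := mul_le_mul_of_nonneg_right (hpt _ _ hi) ha
            rw [if_pos h.1.1] at h1 ⊢
            linarith
          · by_cases hj : scale z u + q ≤ scale w v
            · have := mul_le_mul_of_nonneg_right (hpt _ _ hj) ha
              rw [if_pos h.1.2, hsymm] at h2 ⊢
              rw [add_comm (scale w v)] at this
              linarith
            · rw [if_pos (c := Balanced _ _ _) ⟨h.2, by lia, by lia⟩] at h3 ⊢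
              linarith
        · rw [if_neg h]
          linarith
    _ ≤ 17 * B * (n * 2 ^ q) + 17 * B * (n * 2 ^ q) + (578 + 848 * K) * (n * 2 ^ q) := by
        simp_rw [Finset.sum_add_distrib]
        refine add_le_add (add_le_add (hdeg hz) ?_) (hA.sum_balanced_pairs_le hq hK hz hw)
        rw [Finset.sum_comm]
        exact hdeg hw
    _ = _ := by ring

lemma Regular.card_filter_le_degree {n : ℕ} (hn : 1 ≤ n) {P : Matrix (Fin n) (Fin n) ℝ}
    {d K τ : ℝ} {q : ℕ} {A : Adj n} (hA : Regular P d K q A) (hd : 0 ≤ d) (hK : 0 < K)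
    (hτ : (4 * K + 3) * d ≤ τ) :
    d * (Finset.univ.filter fun u => τ ≤ degree A u).card ≤ n := by
  have hn0 : (0 : ℝ) < n := by exact_mod_cast hn
  set J := Finset.univ.filter fun u => τ ≤ degree A u
  rcases J.eq_empty_or_nonempty with hJ | hJ
  · simp [hJ]
  have : NeZero n := ⟨by lia⟩
  have h := hA.discrepancy 0 (by lia) 0 (by lia) 2 (by lia) J Finset.univ hJ Finset.univ_nonempty
  have he : J.card * τ ≤ edgesBetween A J Finset.univ := by
    rw [edgesBetween, ← nsmul_eq_mul, ← Finset.sum_const]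
    exact Finset.sum_le_sum fun u hu => (Finset.mem_filter.1 hu).2
  have hexp : Real.exp (2 * ((2 : ℕ) / 4)) ≤ 3 := by
    have := Real.exp_one_lt_d9
    norm_num
    linarith
  have h1 : d / n * J.card * n * Real.exp (2 * ((2 : ℕ) / 4)) ≤ d * J.card * 3 := by
    rw [show d / n * J.card * n = d * J.card by field_simp]
    exact mul_le_mul_of_nonneg_left hexp (mul_nonneg hd (Nat.cast_nonneg _))
  have h2 := mul_le_mul_of_nonneg_left hτ (Nat.cast_nonneg (α := ℝ) J.card)
  simp only [ent, Finset.card_univ, Fintype.card_fin, CharP.cast_eq_zero, mul_zero, zero_mul,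
    neg_zero, Real.exp_zero, mul_one, zero_add] at h
  push_cast at h h1
  have h3 : K * (d * J.card) ≤ K * n := by nlinarith
  exact le_of_mul_le_mul_left h3 hK

lemma mul_mul_sub_le {n : ℕ} {P : Matrix (Fin n) (Fin n) ℝ}
    (hP : ∀ u v, 0 ≤ P u v ∧ P u v ≤ 1) {d : ℝ} (hd : ∀ u v, P u v ≤ d / n) {A : Adj n}
    (hA : IsGraph A) (q : ℕ) {z w : Fin n → ℤ} {S : Finset (Fin n)}
    (hz : ∀ u ∉ S, z u = 0) (hw : ∀ u ∉ S, w u = 0) (u v : Fin n) :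
    (z u : ℝ) * w v * (aVal A u v - P u v) ≤
      8 * 2 ^ q * (lightCoef q z w u v * (aVal A u v - P u v)) +
      (if u = v then ((z u : ℝ) ^ 2 + (w u : ℝ) ^ 2) / 2 else 0) +
      4 * (if (u ∈ S ∧ v ∈ S) ∧ q < scale z u + scale w v then
        2 ^ (scale z u + scale w v) * aVal A u v else 0) +
      d / n / 2 ^ q * ((z u : ℝ) ^ 2 * (w v : ℝ) ^ 2) := by
  have ha := aVal_nonneg A u v
  have hPuv := hP u v
  have hdn : 0 ≤ d / n := hPuv.1.trans (hd u v)
  have hheavy : 0 ≤ if (u ∈ S ∧ v ∈ S) ∧ q < scale z u + scale w v then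
      2 ^ (scale z u + scale w v) * aVal A u v else 0 := by
    split_ifs <;> positivity
  have hsq : 0 ≤ d / n / 2 ^ q * ((z u : ℝ) ^ 2 * (w v : ℝ) ^ 2) := by positivity
  by_cases huv : u = v
  · subst huv
    have h0 : aVal A u u = 0 := by simp [aVal, hA.1 u]
    have hl : lightCoef q z w u u = 0 := by simp [lightCoef]
    have h1 : -(z u * w u * P u u) ≤ ((z u : ℝ) ^ 2 + (w u : ℝ) ^ 2) / 2 := by
      nlinarith [mul_nonneg hPuv.1 (sq_nonneg ((z u : ℝ) + w u)),
        mul_nonneg (sub_nonneg.2 hPuv.2) (add_nonneg (sq_nonneg (z u : ℝ)) (sq_nonneg (w u : ℝ)))]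
    rw [if_pos rfl, hl, zero_mul, mul_zero]
    rw [h0] at hheavy ⊢
    linarith
  rw [if_neg huv]
  by_cases hq : scale z u + scale w v ≤ q
  · have hl : 8 * 2 ^ q * (lightCoef q z w u v * (aVal A u v - P u v)) =
        z u * w v * (aVal A u v - P u v) := by
      rw [lightCoef, if_pos ⟨huv, hq⟩]
      field_simp
    linarith
  have hl : lightCoef q z w u v = 0 := by simp [lightCoef, hq]
  by_cases h0 : z u = 0 ∨ w v = 0
  · have h1 : (z u : ℝ) * w v = 0 := by exact_mod_cast mul_eq_zero.2 h0
    rw [h1, hl]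
    linarith
  push Not at h0
  have hS : u ∈ S ∧ v ∈ S := ⟨by_contra fun h => h0.1 (hz u h), by_contra fun h => h0.2 (hw v h)⟩
  rw [if_pos ⟨hS, not_le.1 hq⟩, hl]
  have habs : |(z u : ℝ) * w v| ≤ 4 * 2 ^ (scale z u + scale w v) := by
    rw [abs_mul, pow_add]
    refine (mul_le_mul (abs_le_two_pow_scale z u) (abs_le_two_pow_scale w v)
      (abs_nonneg _) (by positivity)).trans (le_of_eq ?_)
    ring
  have hge : 2 ^ q ≤ |(z u : ℝ) * w v| := by
    rw [abs_mul]
    refine le_trans ?_ (mul_le_mul (two_pow_scale_le h0.1) (two_pow_scale_le h0.2)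
      (by positivity) (abs_nonneg _))
    rw [← pow_add]
    exact pow_le_pow_right₀ one_le_two (not_le.1 hq).le
  have h1 : |(z u : ℝ) * w v| ≤ (z u : ℝ) ^ 2 * (w v : ℝ) ^ 2 / 2 ^ q := by
    rw [le_div_iff₀ (by positivity), ← mul_pow, ← sq_abs, sq]
    exact mul_le_mul_of_nonneg_left hge (abs_nonneg _)
  have h2 : -((z u : ℝ) * w v * P u v) ≤ d / n * ((z u : ℝ) ^ 2 * (w v : ℝ) ^ 2 / 2 ^ q) := by
    calc -((z u : ℝ) * w v * P u v) = P u v * -((z u : ℝ) * w v) := by ring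
      _ ≤ P u v * |(z u : ℝ) * w v| := mul_le_mul_of_nonneg_left (neg_le_abs _) hPuv.1
      _ ≤ _ := mul_le_mul (hd u v) h1 (abs_nonneg _) hdn
  have h3 : (z u : ℝ) * w v * aVal A u v ≤ 4 * 2 ^ (scale z u + scale w v) * aVal A u v :=
    mul_le_mul_of_nonneg_right ((le_abs_self _).trans habs) ha
  calc _ = (z u : ℝ) * w v * aVal A u v + -((z u : ℝ) * w v * P u v) := by ring
    _ ≤ _ := add_le_add h3 h2
    _ = _ := by ring

lemma Regular.sum_mul_sub_le {n : ℕ} (hn : 1 ≤ n) {P : Matrix (Fin n) (Fin n) ℝ}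
    (hP : ∀ u v, 0 ≤ P u v ∧ P u v ≤ 1) {d K B : ℝ} (hd : ∀ u v, P u v ≤ d / n)
    {q : ℕ} {A : Adj n} (hA : Regular P d K q A) (hq : d ≤ 4 ^ q) (hK : 0 ≤ K) (hB : 0 ≤ B)
    {z w : Fin n → ℤ} (hz : z ∈ latticeBall n) (hw : w ∈ latticeBall n) {S : Finset (Fin n)}
    (hS : ∀ u ∈ S, degree A u ≤ B * 4 ^ q) (hzS : ∀ u ∉ S, z u = 0) (hwS : ∀ u ∉ S, w u = 0) :
    ∑ u, ∑ v, (z u : ℝ) * w v * (aVal A u v - P u v) ≤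
      (136 * B + 3400 * K + 2936) * ((n : ℝ) * 2 ^ q) := by
  have hn0 : (0 : ℝ) < n := by exact_mod_cast hn
  have hdiag : ∑ u, ∑ v, (if u = v then ((z u : ℝ) ^ 2 + (w u : ℝ) ^ 2) / 2 else 0) ≤
      16 * ((n : ℝ) * 2 ^ q) := by
    simp only [Finset.sum_ite_eq, Finset.mem_univ, if_true]
    rw [← Finset.sum_div, Finset.sum_add_distrib]
    have h1 := sum_sq_le_of_mem_latticeBall hz
    have h2 := sum_sq_le_of_mem_latticeBall hw
    have h3 := mul_le_mul_of_nonneg_left (one_le_pow₀ one_le_two : (1 : ℝ) ≤ 2 ^ q) hn0.le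
    linarith
  have hsq : ∑ u, ∑ v, d / n / 2 ^ q * ((z u : ℝ) ^ 2 * (w v : ℝ) ^ 2) ≤
      256 * ((n : ℝ) * 2 ^ q) := by
    simp_rw [← Finset.mul_sum]
    rw [Finset.mul_sum]
    simp_rw [← Finset.mul_sum]
    have h1 : d / n / 2 ^ q ≤ 2 ^ q / n := by
      rw [div_div, div_le_div_iff₀ (by positivity) hn0]
      have h4 : (4 : ℝ) ^ q = 2 ^ q * 2 ^ q := by rw [← mul_pow]; norm_num
      rw [h4] at hq
      nlinarith
    have h2 := sum_sum_sq_mul_sq_le hz hw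
    simp_rw [← Finset.mul_sum] at h2
    refine (mul_le_mul h1 h2 ?_ (by positivity)).trans (le_of_eq ?_)
    · exact Finset.sum_nonneg fun u _ => mul_nonneg (sq_nonneg _)
        (Finset.sum_nonneg fun v _ => sq_nonneg _)
    · field_simp
  have hheavy := hA.sum_heavy_le hq hK hB hz hw hS
  have hlight := hA.light z hz w hw
  have hlight' := mul_le_mul_of_nonneg_left hlight (by positivity : (0 : ℝ) ≤ 8 * 2 ^ q)
  refine (Finset.sum_le_sum fun u _ => Finset.sum_le_sum fun v _ =>
    mul_mul_sub_le hP hd hA.isGraph q hzS hwS u v).trans ?_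
  simp only [Finset.sum_add_distrib]
  have e1 : ∑ u, ∑ v, 8 * 2 ^ q * (lightCoef q z w u v * (aVal A u v - P u v)) =
      8 * 2 ^ q * ∑ u, ∑ v, lightCoef q z w u v * (aVal A u v - P u v) := by
    simp only [Finset.mul_sum]
  have e2 : ∑ u, ∑ v, 4 * (if (u ∈ S ∧ v ∈ S) ∧ q < scale z u + scale w v then
        2 ^ (scale z u + scale w v) * aVal A u v else 0) =
      4 * ∑ u, ∑ v, (if (u ∈ S ∧ v ∈ S) ∧ q < scale z u + scale w v then
        2 ^ (scale z u + scale w v) * aVal A u v else 0) := by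
    simp only [Finset.mul_sum]
  rw [e1, e2]
  linarith

lemma sum_abs_mul_le {n : ℕ} {q : ℕ} {d : ℝ} (hn : 1 ≤ n) (hd : 0 ≤ d)
    (hq : d ≤ 4 ^ q) {z w : Fin n → ℤ} (hz : z ∈ latticeBall n) (hw : w ∈ latticeBall n)
    {J : Finset (Fin n)} (hJ : d * J.card ≤ n) :
    ∑ u, ∑ v, (if u ∈ J then d / n * (|(z u : ℝ)| * |(w v : ℝ)|) else 0) ≤
      16 * ((n : ℝ) * 2 ^ q) := by
  have hn0 : (0 : ℝ) < n := by exact_mod_cast hn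
  have hpos : (0 : ℝ) < 2 ^ q := by positivity
  have h4 : (4 : ℝ) ^ q = 2 ^ q * 2 ^ q := by rw [← mul_pow]; norm_num
  have hz2 := sum_sq_le_of_mem_latticeBall hz
  have hw2 := sum_sq_le_of_mem_latticeBall hw
  calc _ ≤ ∑ u, ∑ v, (d / n / 2 ^ q / 2 * (z u : ℝ) ^ 2 +
        if u ∈ J then d / n * 2 ^ q / 2 * (w v : ℝ) ^ 2 else 0) := by
        refine Finset.sum_le_sum fun u _ => Finset.sum_le_sum fun v _ => ?_
        split_ifs
        · have h1 : |(z u : ℝ)| * |(w v : ℝ)| ≤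
              ((z u : ℝ) ^ 2 / 2 ^ q + 2 ^ q * (w v : ℝ) ^ 2) / 2 := by
            rw [← sq_abs (z u : ℝ), ← sq_abs (w v : ℝ)]
            generalize |(z u : ℝ)| = a
            generalize |(w v : ℝ)| = b
            have : a ^ 2 / 2 ^ q + 2 ^ q * b ^ 2 - 2 * (a * b) = (a - 2 ^ q * b) ^ 2 / 2 ^ q := by
              field_simp
              ring
            have h2 : 0 ≤ (a - 2 ^ q * b) ^ 2 / 2 ^ q := by positivity
            linarith
          refine (mul_le_mul_of_nonneg_left h1 (by positivity)).trans (le_of_eq ?_)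
          ring
        · positivity
    _ = d / 2 ^ q / 2 * ∑ u, (z u : ℝ) ^ 2 +
        d * J.card / n * 2 ^ q / 2 * ∑ v, (w v : ℝ) ^ 2 := by
        simp only [Finset.sum_add_distrib, Finset.sum_const, Finset.card_univ, Fintype.card_fin,
          nsmul_eq_mul]
        congr 1
        · rw [Finset.mul_sum]
          refine Finset.sum_congr rfl fun u _ => ?_
          field_simp
        · rw [Finset.sum_comm]
          simp only [Finset.sum_ite_mem, Finset.univ_inter, Finset.sum_const, nsmul_eq_mul]
          rw [Finset.mul_sum]
          refine Finset.sum_congr rfl fun u _ => ?_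
          ring
    _ ≤ 2 ^ q / 2 * (16 * n) + 1 * 2 ^ q / 2 * (16 * n) := by
        gcongr
        · rw [div_le_iff₀ hpos, ← h4]
          exact hq
        · exact (div_le_one hn0).2 hJ
    _ = _ := by ring

lemma Regular.sum_mul_trim_sub_le {n : ℕ} (hn : 1 ≤ n) {P : Matrix (Fin n) (Fin n) ℝ}
    (hP : ∀ u v, 0 ≤ P u v ∧ P u v ≤ 1) {d K B τ : ℝ} (hd : ∀ u v, P u v ≤ d / n)
    (hd0 : 0 ≤ d) {q : ℕ} {A : Adj n} (hA : Regular P d K q A) (hq : d ≤ 4 ^ q) (hK : 0 < K)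
    (hB : 0 ≤ B) (hτ : (4 * K + 3) * d ≤ τ) (hτ' : τ ≤ B * d)
    {z w : Fin n → ℤ} (hz : z ∈ latticeBall n) (hw : w ∈ latticeBall n) :
    ∑ u, ∑ v, (z u : ℝ) * w v * (trim A τ - P) u v ≤
      (136 * B + 3400 * K + 2968) * ((n : ℝ) * 2 ^ q) := by
  set J := Finset.univ.filter fun u => τ ≤ degree A u with hJ
  have hJcard : d * J.card ≤ n := hA.card_filter_le_degree hn hd0 hK hτ
  have hmem : ∀ u, u ∈ J ↔ τ ≤ degree A u := fun u => by simp [hJ]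
  have hres : ∀ {x : Fin n → ℤ}, x ∈ latticeBall n →
      (fun u => if u ∈ J then 0 else x u) ∈ latticeBall n := fun {x} hx => by
    refine mem_latticeBall.2 (le_trans (Finset.sum_le_sum fun u _ => ?_) (mem_latticeBall.1 hx))
    split_ifs
    · positivity
    · rfl
  have hmain := hA.sum_mul_sub_le (S := Jᶜ) hn hP hd hq hK.le hB (hres hz) (hres hw)
    (fun u hu => ?_) (fun u hu => ?_) (fun u hu => ?_)
  rotate_left
  · rw [Finset.mem_compl, hmem, not_le] at hu
    nlinarith
  · simp_all
  · simp_all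
  have h1 := sum_abs_mul_le hn hd0 hq hz hw hJcard
  have h2 := sum_abs_mul_le hn hd0 hq hw hz hJcard
  rw [Finset.sum_comm] at h2
  refine le_trans ?_ (add_le_add (add_le_add hmain h1) h2 |>.trans (le_of_eq (by ring)))
  simp only [← Finset.sum_add_distrib]
  refine Finset.sum_le_sum fun u _ => Finset.sum_le_sum fun v _ => ?_
  have hdn : 0 ≤ d / n := (hP u v).1.trans (hd u v)
  have hab : -((z u : ℝ) * w v * P u v) ≤ d / n * (|(z u : ℝ)| * |(w v : ℝ)|) := by
    calc -((z u : ℝ) * w v * P u v) = P u v * -((z u : ℝ) * w v) := by ring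
      _ ≤ P u v * |(z u : ℝ) * w v| := mul_le_mul_of_nonneg_left (neg_le_abs _) (hP u v).1
      _ ≤ _ := by
        rw [abs_mul]
        exact mul_le_mul_of_nonneg_right (hd u v) (by positivity)
  have hnn : 0 ≤ d / n * (|(z u : ℝ)| * |(w v : ℝ)|) := by positivity
  rw [Matrix.sub_apply, trim]
  simp only [← hmem]
  by_cases hu : u ∈ J
  · by_cases hv : v ∈ J
    · simp only [hu, hv, or_self, if_true, Int.cast_zero, zero_mul]
      linarith [mul_comm |(z u : ℝ)| |(w v : ℝ)|]
    · simp only [hu, hv, true_or, if_true, if_false, Int.cast_zero, zero_mul]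
      linarith
  · by_cases hv : v ∈ J
    · simp only [hu, hv, or_true, if_true, if_false, Int.cast_zero, mul_zero, zero_mul]
      linarith [mul_comm |(z u : ℝ)| |(w v : ℝ)|]
    · simp [hu, hv]

lemma exists_int_abs_le (t : ℝ) : ∃ k : ℤ, (k : ℝ) ^ 2 ≤ t ^ 2 ∧ (t - k) ^ 2 ≤ 1 := by
  rcases le_total 0 t with ht | ht
  · refine ⟨⌊t⌋, ?_, ?_⟩
    · exact pow_le_pow_left₀ (by exact_mod_cast Int.floor_nonneg.2 ht) (Int.floor_le t) 2
    · nlinarith [Int.floor_le t, Int.lt_floor_add_one t]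
  · refine ⟨⌈t⌉, ?_, ?_⟩
    · have h1 : (⌈t⌉ : ℝ) ≤ 0 := by exact_mod_cast Int.ceil_le.2 (by simpa using ht)
      nlinarith [Int.le_ceil t]
    · nlinarith [Int.le_ceil t, Int.ceil_lt_add_one t]

lemma exists_mem_latticeBall_near {n : ℕ} (hn : 1 ≤ n) {x : EuclideanSpace ℝ (Fin n)}
    (hx : ‖x‖ ≤ 1) : ∃ z ∈ latticeBall n, ∃ x' : EuclideanSpace ℝ (Fin n),
      (∀ u, x' u = z u / (4 * Real.sqrt n)) ∧ ‖x'‖ ≤ 1 ∧ ‖x - x'‖ ≤ 1 / 4 := by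
  have hn0 : (0 : ℝ) < n := by exact_mod_cast hn
  have hs : 0 < Real.sqrt n := Real.sqrt_pos.2 hn0
  have hs2 : Real.sqrt n ^ 2 = n := Real.sq_sqrt hn0.le
  choose k hk hk' using fun u => exists_int_abs_le (4 * Real.sqrt n * x u)
  have hx2 : ∑ u, x u ^ 2 ≤ 1 := by
    rw [← EuclideanSpace.real_norm_sq_eq]
    exact pow_le_one₀ (norm_nonneg _) hx
  have hk2 : ∑ u, (k u : ℝ) ^ 2 ≤ 16 * n := by
    calc ∑ u, (k u : ℝ) ^ 2 ≤ ∑ u, (4 * Real.sqrt n * x u) ^ 2 :=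
          Finset.sum_le_sum fun u _ => hk u
      _ = 16 * n * ∑ u, x u ^ 2 := by
          rw [Finset.mul_sum]
          refine Finset.sum_congr rfl fun u _ => ?_
          rw [mul_pow, mul_pow, hs2]
          norm_num
      _ ≤ 16 * n := by nlinarith
  refine ⟨k, mem_latticeBall.2 (by exact_mod_cast hk2),
    WithLp.toLp 2 fun u => k u / (4 * Real.sqrt n), fun u => rfl, ?_, ?_⟩
  · refine abs_le_of_sq_le_sq' ?_ zero_le_one |>.2
    rw [EuclideanSpace.real_norm_sq_eq]
    simp only [div_pow, mul_pow, hs2]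
    rw [← Finset.sum_div, div_le_iff₀ (by positivity)]
    linarith
  · refine abs_le_of_sq_le_sq' ?_ (by norm_num) |>.2
    rw [EuclideanSpace.real_norm_sq_eq]
    calc _ = ∑ u, (4 * Real.sqrt n * x u - k u) ^ 2 / (16 * n) := by
          refine Finset.sum_congr rfl fun u _ => ?_
          rw [PiLp.sub_apply, show 16 * (n : ℝ) = (4 * Real.sqrt n) ^ 2 by rw [mul_pow, hs2]; norm_num,
            ← div_pow, sub_div, mul_div_cancel_left₀ _ (by positivity)]
      _ ≤ ∑ u : Fin n, 1 / (16 * (n : ℝ)) := by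
          refine Finset.sum_le_sum fun u _ => ?_
          gcongr
          exact hk' u
      _ = (1 / 4) ^ 2 := by
          rw [Finset.sum_const, Finset.card_univ, Fintype.card_fin, nsmul_eq_mul]
          field_simp
          norm_num

lemma opNorm_le_norm_toEuclideanCLM {n : ℕ} (M : Matrix (Fin n) (Fin n) ℝ) :
    opNorm M ≤ ‖Matrix.toEuclideanCLM (n := Fin n) (𝕜 := ℝ) M‖ := by
  have hnorm : ∀ x : Fin n → ℝ, sqnorm x = ‖WithLp.toLp 2 x‖ := fun x => by
    simp [sqnorm, EuclideanSpace.norm_eq]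
  refine Real.sSup_le ?_ (norm_nonneg _)
  rintro t ⟨x, hx, rfl⟩
  rw [hnorm] at hx ⊢
  rw [← Matrix.toEuclideanCLM_toLp]
  exact ContinuousLinearMap.unit_le_opNorm _ _ hx.le

/-- The operator norm is controlled by the bilinear form on integer vectors. -/
lemma opNorm_le_of_latticeBall {n : ℕ} (hn : 1 ≤ n) {M : Matrix (Fin n) (Fin n) ℝ} {T : ℝ}
    (hM : ∀ z ∈ latticeBall n, ∀ w ∈ latticeBall n, ∑ u, ∑ v, (z u : ℝ) * w v * M u v ≤ T * n) :
    opNorm M ≤ T / 8 := by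
  have hn0 : (0 : ℝ) < n := by exact_mod_cast hn
  have hs2 : Real.sqrt n ^ 2 = n := Real.sq_sqrt hn0.le
  refine (opNorm_le_norm_toEuclideanCLM M).trans ?_
  set f := Matrix.toEuclideanCLM (n := Fin n) (𝕜 := ℝ) M with hf
  have hT : 0 ≤ T := by
    have h := hM 0 (by simp [mem_latticeBall]) 0 (by simp [mem_latticeBall])
    simp only [Pi.zero_apply, Int.cast_zero, zero_mul, Finset.sum_const_zero] at h
    exact nonneg_of_mul_nonneg_left h hn0
  have key : ∀ y x : EuclideanSpace ℝ (Fin n), ‖y‖ ≤ 1 → ‖x‖ ≤ 1 →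
      inner ℝ y (f x) ≤ T / 16 + ‖f‖ / 2 := by
    intro y x hy hx
    obtain ⟨z, hz, y', hy', hy'1, hyy'⟩ := exists_mem_latticeBall_near hn hy
    obtain ⟨w, hw, x', hx', hx'1, hxx'⟩ := exists_mem_latticeBall_near hn hx
    have h1 : inner ℝ y' (f x') ≤ T / 16 := by
      have h2 : inner ℝ y' (f x') = (∑ u, ∑ v, (z u : ℝ) * w v * M u v) / (16 * n) := by
        rw [hf, Matrix.inner_toEuclideanCLM, dotProduct, Finset.sum_div]
        refine Finset.sum_congr rfl fun u _ => ?_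
        rw [Matrix.mulVec, dotProduct, Finset.mul_sum, Finset.sum_div]
        refine Finset.sum_congr rfl fun v _ => ?_
        rw [hy', hx', show 16 * (n : ℝ) = (4 * Real.sqrt n) ^ 2 by rw [mul_pow, hs2]; norm_num]
        field_simp
      rw [h2, div_le_div_iff₀ (by positivity) (by norm_num)]
      nlinarith [hM z hz w hw]
    have h2 : inner ℝ (y - y') (f x) ≤ ‖f‖ / 4 := by
      refine (real_inner_le_norm _ _).trans ?_
      have := mul_le_mul hyy' (f.unit_le_opNorm x hx) (norm_nonneg _) (by norm_num)
      linarith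
    have h3 : inner ℝ y' (f (x - x')) ≤ ‖f‖ / 4 := by
      refine (real_inner_le_norm _ _).trans ?_
      have h4 := (f.le_opNorm (x - x')).trans (mul_le_mul_of_nonneg_left hxx' (norm_nonneg f))
      have := mul_le_mul hy'1 h4 (norm_nonneg _) zero_le_one
      linarith
    have h4 : inner ℝ y (f x) =
        inner ℝ y' (f x') + inner ℝ (y - y') (f x) + inner ℝ y' (f (x - x')) := by
      rw [map_sub, inner_sub_left, inner_sub_right]
      ring
    linarith
  have hle : ‖f‖ ≤ T / 16 + ‖f‖ / 2 := by
    refine ContinuousLinearMap.opNorm_le_of_unit_norm (by positivity) fun x hx => ?_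
    rcases eq_or_ne (f x) 0 with h0 | h0
    · rw [h0, norm_zero]
      positivity
    have hpos : 0 < ‖f x‖ := norm_pos_iff.2 h0
    have h := key (‖f x‖⁻¹ • f x) x (by rw [norm_smul, norm_inv, norm_norm,
      inv_mul_cancel₀ hpos.ne']) hx.le
    rwa [real_inner_smul_left, real_inner_self_eq_norm_sq, sq, inv_mul_cancel_left₀ hpos.ne'] at h
  linarith

lemma prob_mono {n : ℕ} {P : Matrix (Fin n) (Fin n) ℝ} (hP : ∀ u v, 0 ≤ P u v ∧ P u v ≤ 1)
    {S T : Set (Adj n)} (hST : S ⊆ T) : prob P S ≤ prob P T :=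
  Finset.sum_le_sum fun A _ =>
    Set.indicator_le_indicator_of_subset hST (fun A => weight_nonneg hP A) A

lemma le_pmax {n : ℕ} {P : Matrix (Fin n) (Fin n) ℝ} (hP : ∀ u v, P u v ≤ 1) (u v : Fin n) :
    P u v ≤ pmax P :=
  le_csSup ⟨1, by rintro _ ⟨u, v, rfl⟩; exact hP u v⟩ ⟨u, v, rfl⟩

lemma pmax_nonneg {n : ℕ} {P : Matrix (Fin n) (Fin n) ℝ} (hP : ∀ u v, 0 ≤ P u v) : 0 ≤ pmax P :=
  Real.sSup_nonneg (by rintro _ ⟨u, v, rfl⟩; exact hP u v)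

/-- Lemma 5 (operator norm bound for the trimmed adjacency matrix). -/
theorem statement_13 (C' : ℝ) (hC' : 0 < C') :
    ∃ C C1 C2 : ℝ, 0 < C ∧ 0 < C1 ∧ C1 < C2 ∧
      ∀ (n : ℕ) (P : Matrix (Fin n) (Fin n) ℝ),
        (∀ u v, P u v = P v u) → (∀ u v, 0 ≤ P u v ∧ P u v ≤ 1) →
        1 - (n : ℝ) ^ (-C') ≤ prob P
          { A | ∀ τ : ℝ, C1 * ((n : ℝ) * pmax P + 1) ≤ τ →
              τ ≤ C2 * ((n : ℝ) * pmax P + 1) →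
              opNorm (trim A τ - P) ≤ C * Real.sqrt ((n : ℝ) * pmax P + 1) } := by
  set K := C' + 12 with hK
  have hK0 : 0 < K := by positivity
  refine ⟨(136 * (4 * K + 4) + 3400 * K + 2968) / 4, 4 * K + 3, 4 * K + 4, by positivity,
    by positivity, by linarith, fun n P hs hP => ?_⟩
  rcases Nat.eq_zero_or_pos n with rfl | hn
  · have h1 : prob P Set.univ = 1 := by
      rw [prob, ← sum_weight_eq_one P]
      simp
    have h2 : (0 : ℝ) ≤ ((0 : ℕ) : ℝ) ^ (-C') := by positivity
    refine le_trans (by linarith) (prob_mono hP fun A _ τ _ _ => ?_)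
    refine Real.sSup_le ?_ (by positivity)
    rintro t ⟨x, hx, -⟩
    simp [sqnorm] at hx
  have hn0 : (0 : ℝ) < n := by exact_mod_cast hn
  set d := (n : ℝ) * pmax P + 1 with hd
  have hd1 : 1 ≤ d := by
    have := mul_nonneg hn0.le (pmax_nonneg fun u v => (hP u v).1)
    linarith
  have hPd : ∀ u v, P u v ≤ d / n := fun u v => by
    rw [le_div_iff₀ hn0]
    nlinarith [le_pmax (fun u v => (hP u v).2) u v]
  obtain ⟨m, hm, hm'⟩ := exists_nat_pow_near hd1 (by norm_num : (1 : ℝ) < 4)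
  refine (one_sub_rpow_le_prob_regular hn hs hP hPd hm'.le hC').trans
    (prob_mono hP fun A hA τ hτ hτ' => ?_)
  have hpow : (2 : ℝ) ^ (m + 1) ≤ 2 * Real.sqrt d := by
    rw [pow_succ']
    refine mul_le_mul_of_nonneg_left (Real.le_sqrt_of_sq_le ?_) zero_le_two
    rwa [← pow_mul, mul_comm, pow_mul, show (2 : ℝ) ^ 2 = 4 by norm_num]
  refine (opNorm_le_of_latticeBall hn
    (T := (136 * (4 * K + 4) + 3400 * K + 2968) * 2 ^ (m + 1)) fun z hz w hw => ?_).trans ?_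
  · refine (Regular.sum_mul_trim_sub_le hn hP hPd (by linarith) hA hm'.le hK0 (by positivity)
      hτ hτ' hz hw).trans (le_of_eq ?_)
    ring
  · have := mul_le_mul_of_nonneg_left hpow
      (by positivity : 0 ≤ (136 * (4 * K + 4) + 3400 * K + 2968) / 8)
    linarith

end SBM
end

section
/- Let B ∈ ℝ^{k×k} be symmetric, let σ : [n] → [k] have all community sizes n_i = #{u : σ(u) = i} ≥ 1, and let P be the n×n matrix with P_{uv} = B_{σ(u)σ(v)}. Let Z ∈ {0,1}^{n×k} be the membership matrix with Z_{u,i} = 1 if and only if σ(u) = i, and let Δ = diag(√n_1, …, √n_k). Then there exist a k×k orthogonal matrix W and a k×k diagonal matrix Λ such that P = U·Λ·Uᵀ, where U = Z·Δ^{−1}·W satisfies Uᵀ·U = I_k. -/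
open scoped BigOperators
open Filter

namespace SBM

open Filter Matrix

/-- The column-normalized membership matrix of `σ`. -/
noncomputable def normMembership {n k : ℕ} (σ : Fin n → Fin k) : Matrix (Fin n) (Fin k) ℝ :=
  Matrix.of (fun (u : Fin n) (i : Fin k) => if σ u = i then (1 : ℝ) else 0) *
    Matrix.diagonal (fun i => (Real.sqrt (comSize σ i))⁻¹)

theorem normMembership_apply {n k : ℕ} (σ : Fin n → Fin k) (u : Fin n) (i : Fin k) :
    normMembership σ u i = if σ u = i then (Real.sqrt (comSize σ i))⁻¹ else 0 := by
  simp [normMembership, Matrix.mul_diagonal]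

theorem normMembership_transpose_mul_self {n k : ℕ} (σ : Fin n → Fin k)
    (hσ : ∀ i, 0 < comSize σ i) :
    (normMembership σ)ᵀ * normMembership σ = 1 := by
  ext i j
  simp only [Matrix.mul_apply, Matrix.transpose_apply, normMembership_apply, Matrix.one_apply]
  split_ifs with hij
  · subst hij
    have hsum : ∀ u, (if σ u = i then (Real.sqrt (comSize σ i))⁻¹ else 0) *
        (if σ u = i then (Real.sqrt (comSize σ i))⁻¹ else 0) =
        if σ u = i then (comSize σ i)⁻¹ else 0 := fun u => by
      split_ifs
      · rw [← mul_inv, Real.mul_self_sqrt (hσ i).le]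
      · simp
    simp only [hsum]
    rw [← Finset.sum_filter, Finset.sum_const, nsmul_eq_mul]
    exact mul_inv_cancel₀ (hσ i).ne'
  · refine Finset.sum_eq_zero fun u _ => ?_
    by_cases hu : σ u = i
    · simp [show σ u ≠ j from fun h => hij (hu.symm.trans h)]
    · simp [hu]

theorem pMat_eq_normMembership_mul {n k : ℕ} (B : Matrix (Fin k) (Fin k) ℝ) (σ : Fin n → Fin k)
    (hσ : ∀ i, 0 < comSize σ i) :
    pMat B σ = normMembership σ *
      Matrix.of (fun i j => Real.sqrt (comSize σ i) * B i j * Real.sqrt (comSize σ j)) *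
      (normMembership σ)ᵀ := by
  ext u v
  have hu := (Real.sqrt_pos.2 (hσ (σ u))).ne'
  have hv := (Real.sqrt_pos.2 (hσ (σ v))).ne'
  simp only [pMat, Matrix.mul_apply, Matrix.transpose_apply, normMembership_apply,
    Matrix.of_apply, ite_mul, mul_ite, zero_mul, mul_zero, Finset.sum_ite_eq, Finset.mem_univ,
    if_true]
  field_simp

theorem exists_orthogonal_diagonalization {k : ℕ} (M : Matrix (Fin k) (Fin k) ℝ)
    (hM : M.IsHermitian) :
    ∃ (W : Matrix (Fin k) (Fin k) ℝ) (Λ : Fin k → ℝ),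
      Wᵀ * W = 1 ∧ M = W * Matrix.diagonal Λ * Wᵀ := by
  refine ⟨hM.eigenvectorUnitary, hM.eigenvalues, ?_, ?_⟩
  · simpa [Matrix.star_eq_conjTranspose] using Unitary.coe_star_mul_self hM.eigenvectorUnitary
  · have h := hM.spectral_theorem
    rw [Unitary.conjStarAlgAut_apply] at h
    simpa [Matrix.star_eq_conjTranspose, Function.comp_def] using h

/-- Lemma (eigendecomposition of `P` with membership-matrix eigenvectors). -/
theorem statement_14
    (n k : ℕ) (B : Matrix (Fin k) (Fin k) ℝ)
    (hB : ∀ i j, B i j = B j i)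
    (σ : Fin n → Fin k)
    (hsz : ∀ i, 1 ≤ comSize σ i) :
    ∃ (W : Matrix (Fin k) (Fin k) ℝ) (Λ : Fin k → ℝ),
      Wᵀ * W = 1 ∧
      (Matrix.of (fun (u : Fin n) (i : Fin k) => if σ u = i then (1 : ℝ) else 0) *
          Matrix.diagonal (fun i => (Real.sqrt (comSize σ i))⁻¹) * W)ᵀ *
        (Matrix.of (fun (u : Fin n) (i : Fin k) => if σ u = i then (1 : ℝ) else 0) *
          Matrix.diagonal (fun i => (Real.sqrt (comSize σ i))⁻¹) * W) = 1 ∧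
      pMat B σ =
        (Matrix.of (fun (u : Fin n) (i : Fin k) => if σ u = i then (1 : ℝ) else 0) *
            Matrix.diagonal (fun i => (Real.sqrt (comSize σ i))⁻¹) * W) *
          Matrix.diagonal Λ *
          (Matrix.of (fun (u : Fin n) (i : Fin k) => if σ u = i then (1 : ℝ) else 0) *
            Matrix.diagonal (fun i => (Real.sqrt (comSize σ i))⁻¹) * W)ᵀ := by
  have hσ : ∀ i, 0 < comSize σ i := fun i => zero_lt_one.trans_le (hsz i)
  obtain ⟨W, Λ, hW, hM⟩ := exists_orthogonal_diagonalization
    (Matrix.of fun i j => Real.sqrt (comSize σ i) * B i j * Real.sqrt (comSize σ j)) (by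
      ext i j
      simp only [Matrix.conjTranspose_apply, Matrix.of_apply, star_trivial]
      rw [hB j i]
      ring)
  refine ⟨W, Λ, hW, ?_, ?_⟩ <;> rw [← normMembership]
  · rw [Matrix.transpose_mul, Matrix.mul_assoc, ← Matrix.mul_assoc _ (normMembership σ) W,
      normMembership_transpose_mul_self σ hσ, Matrix.one_mul, hW]
  · rw [pMat_eq_normMembership_mul B σ hσ, hM, Matrix.transpose_mul]
    simp only [Matrix.mul_assoc]

end SBM
end
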